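/- arXiv:1007.1118 — 3 statements merged into one kernel-verified Lean document; each statement's English description precedes it below -/
import Mathlib

section
/- Let Γ be the finite simple graph on vertices {A, B, C, X, Y} with edge set {AB, AC, BC, BX, BY, CX, CY, XY} (so A, B, C generate a copy of ℤ³, B, C, X, Y generate a copy of ℤ⁴, and there are no edges between A and either of X, Y). Let G be the subgroup of A(Γ) generated by the four elements A·B, A·C, X, Y (products of vertex generators). Let Γ' be the graph on four vertices {X', Y', P, Q} with edge set {X'Y', X'P, Y'P, PQ} (a triangle on X', Y', P with one extra edge from P to Q). Then G is isomorphic to the right-angled Artin group A(Γ'). -/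
/-!
Write `f : A(Γ) → A(Γ')` for the homomorphism that kills `B`; deleting the vertex `B` from `Γ`
leaves `Γ'`, with `C` as `P` and `A` as `Q`. The elements `X`, `Y`, `(AB)⁻¹(AC) = B⁻¹C` and `AB`
of `A(Γ)` satisfy the relations of `X'`, `Y'`, `P`, `Q` and are mapped to these by `f`, so they
generate a copy of `A(Γ')`. They also generate `G`.
-/

/-- The relators of the right-angled Artin group on a simple graph `Γ`:
one commutator for each edge. -/
def raagRels {V : Type*} (Γ : SimpleGraph V) : Set (FreeGroup V) :=
  {r | ∃ u v : V, Γ.Adj u v ∧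
    r = FreeGroup.of u * FreeGroup.of v * (FreeGroup.of u)⁻¹ * (FreeGroup.of v)⁻¹}

/-- The graph on vertices `A = 0, B = 1, C = 2, X = 3, Y = 4` with edge set
`{AB, AC, BC, BX, BY, CX, CY, XY}`. -/
def gammaABCXY : SimpleGraph (Fin 5) :=
  SimpleGraph.fromRel (fun i j => (i, j) ∈
    ([(0,1),(0,2),(1,2),(1,3),(1,4),(2,3),(2,4),(3,4)] : List (Fin 5 × Fin 5)))

/-- The graph on vertices `X' = 0, Y' = 1, P = 2, Q = 3`: a triangle on `X', Y', P`
with one extra edge from `P` to `Q`. -/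
def gammaTriEdge : SimpleGraph (Fin 4) :=
  SimpleGraph.fromRel (fun i j => (i, j) ∈
    ([(0,1),(0,2),(1,2),(2,3)] : List (Fin 4 × Fin 4)))

section PresentedGroup

variable {α G : Type*} [Group G] {f : α → G} {rels : Set (FreeGroup α)}

theorem range_toGroup_eq_closure (h : ∀ r ∈ rels, FreeGroup.lift f r = 1) :
    (PresentedGroup.toGroup h).range = Subgroup.closure (Set.range f) := by
  rw [MonoidHom.range_eq_map, ← PresentedGroup.closure_range_of, MonoidHom.map_closure,
    ← Set.range_comp]
  congr 2
  ext x
  exact PresentedGroup.toGroup.of h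

/-- The presented group on `rels` as the subgroup generated by elements `f x` satisfying `rels`,
provided that some homomorphism back to the presented group sends each `f x` to the generator
`x`. -/
def presentedGroupEquivClosure (h : ∀ r ∈ rels, FreeGroup.lift f r = 1)
    (φ : G →* PresentedGroup rels) (hφ : ∀ x, φ (f x) = PresentedGroup.of x) :
    PresentedGroup rels ≃* Subgroup.closure (Set.range f) :=
  have leftInverse : Function.LeftInverse φ (PresentedGroup.toGroup h) :=
    DFunLike.congr_fun (f := φ.comp (PresentedGroup.toGroup h)) (g := MonoidHom.id _) <|
      PresentedGroup.ext fun x ↦ by simp [hφ]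
  (MonoidHom.ofLeftInverse leftInverse).trans
    (MulEquiv.subgroupCongr (range_toGroup_eq_closure h))

end PresentedGroup

theorem closure_insert_insert_inv_mul {G : Type*} [Group G] (a b : G) (s : Set G) :
    Subgroup.closure (insert a (insert (a⁻¹ * b) s)) =
      Subgroup.closure (insert a (insert b s)) := by
  have mem_iff (H : Subgroup G) (ha : a ∈ H) : a⁻¹ * b ∈ H ↔ b ∈ H :=
    H.mul_mem_cancel_left (H.inv_mem ha)
  refine eq_of_forall_ge_iff fun H ↦ ?_
  simp only [Subgroup.closure_le, Set.insert_subset_iff, SetLike.mem_coe]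
  exact and_congr_right fun ha ↦ and_congr_left' (mem_iff H ha)

theorem commute_of_fromRel_mem_adj {V M : Type*} [Mul M] {edges : List (V × V)} {f : V → M}
    (hf : ∀ e ∈ edges, Commute (f e.1) (f e.2)) {u v : V}
    (huv : (SimpleGraph.fromRel fun i j ↦ (i, j) ∈ edges).Adj u v) : Commute (f u) (f v) :=
  huv.2.elim (hf (u, v)) fun h ↦ (hf (v, u) h).symm

/-- The right-angled Artin group `A(Γ)`. -/
abbrev RAAG {V : Type*} (Γ : SimpleGraph V) : Type _ :=
  PresentedGroup (raagRels Γ)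

namespace RAAG

open PresentedGroup (of)

variable {V : Type*} {Γ : SimpleGraph V}

theorem commute_of_adj {u v : V} (huv : Γ.Adj u v) : Commute (of u : RAAG Γ) (of v) := by
  have h : PresentedGroup.mk (raagRels Γ) _ = 1 := PresentedGroup.one_of_mem ⟨u, v, huv, rfl⟩
  simp only [map_mul, map_inv] at h
  exact mul_inv_eq_iff_eq_mul.mp (mul_inv_eq_one.mp h)

theorem lift_eq_one_of_mem_raagRels {H : Type*} [Group H] {f : V → H}
    (hf : ∀ u v, Γ.Adj u v → Commute (f u) (f v)) :
    ∀ r ∈ raagRels Γ, FreeGroup.lift f r = 1 := by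
  rintro _ ⟨u, v, huv, rfl⟩
  simp [(hf u v huv).eq]

/-- The images in `A(Γ)` of the vertices `X', Y', P, Q` of `gammaTriEdge`, namely
`X, Y, B⁻¹C, AB`. -/
def triEdgeImage : Fin 4 → RAAG gammaABCXY :=
  ![of 3, of 4, (of 1)⁻¹ * of 2, of 0 * of 1]

theorem commute_triEdgeImage (u v : Fin 4) (huv : gammaTriEdge.Adj u v) :
    Commute (triEdgeImage u) (triEdgeImage v) := by
  have hAB := commute_of_adj (show gammaABCXY.Adj 0 1 by simp [gammaABCXY])
  have hAC := commute_of_adj (show gammaABCXY.Adj 0 2 by simp [gammaABCXY])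
  have hBC := commute_of_adj (show gammaABCXY.Adj 1 2 by simp [gammaABCXY])
  have hBX := commute_of_adj (show gammaABCXY.Adj 1 3 by simp [gammaABCXY])
  have hBY := commute_of_adj (show gammaABCXY.Adj 1 4 by simp [gammaABCXY])
  have hCX := commute_of_adj (show gammaABCXY.Adj 2 3 by simp [gammaABCXY])
  have hCY := commute_of_adj (show gammaABCXY.Adj 2 4 by simp [gammaABCXY])
  have hXY := commute_of_adj (show gammaABCXY.Adj 3 4 by simp [gammaABCXY])
  have hXP := (hBX.inv_left.mul_left hCX).symm
  have hYP := (hBY.inv_left.mul_left hCY).symm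
  have hPQ := (hAB.inv_right.mul_right hAC).symm.mul_right
    ((Commute.refl _).inv_left.mul_left hBC.symm)
  refine commute_of_fromRel_mem_adj ?_ huv
  simp only [List.forall_mem_cons]
  exact ⟨hXY, hXP, hYP, hPQ, List.forall_mem_nil _⟩

/-- The homomorphism `A(Γ) → A(Γ')` that kills `B` and sends `X, Y, C, A` to `X', Y', P, Q`. -/
def killB : RAAG gammaABCXY →* RAAG gammaTriEdge :=
  PresentedGroup.toGroup (f := ![of 3, 1, of 2, of 0, of 1]) <|
  lift_eq_one_of_mem_raagRels fun u v huv ↦ by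
    have hXY := commute_of_adj (show gammaTriEdge.Adj 0 1 by simp [gammaTriEdge])
    have hXP := commute_of_adj (show gammaTriEdge.Adj 0 2 by simp [gammaTriEdge])
    have hYP := commute_of_adj (show gammaTriEdge.Adj 1 2 by simp [gammaTriEdge])
    have hPQ := commute_of_adj (show gammaTriEdge.Adj 2 3 by simp [gammaTriEdge])
    refine commute_of_fromRel_mem_adj ?_ huv
    simp only [List.forall_mem_cons]
    exact ⟨.one_right _, hPQ.symm, .one_left _, .one_left _, .one_left _, hXP.symm, hYP.symm, hXY,
      List.forall_mem_nil _⟩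

theorem killB_triEdgeImage (v : Fin 4) : killB (triEdgeImage v) = of v := by
  fin_cases v <;> simp [killB, triEdgeImage]

theorem closure_range_triEdgeImage :
    Subgroup.closure (Set.range triEdgeImage) =
      Subgroup.closure {of 0 * of 1, of 0 * of 2, of 3, of 4} := by
  have hP : (of 0 * of 1)⁻¹ * (of 0 * of 2) = ((of 1)⁻¹ * of 2 : RAAG gammaABCXY) := by group
  rw [← closure_insert_insert_inv_mul, hP]
  congr 1
  simp only [triEdgeImage, Matrix.range_cons, Matrix.range_empty]
  grind

end RAAG

/-- The subgroup of `A(Γ)` generated by `AB, AC, X, Y` is isomorphic to the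
right-angled Artin group on a triangle with an extra pendant edge. -/
theorem subgroup_iso_triangle_with_edge :
    Nonempty (↥(Subgroup.closure
      {PresentedGroup.of (rels := raagRels gammaABCXY) 0 * PresentedGroup.of 1,
       PresentedGroup.of (rels := raagRels gammaABCXY) 0 * PresentedGroup.of 2,
       PresentedGroup.of (rels := raagRels gammaABCXY) 3,
       PresentedGroup.of (rels := raagRels gammaABCXY) 4})
      ≃* PresentedGroup (raagRels gammaTriEdge)) :=
  ⟨((presentedGroupEquivClosure (RAAG.lift_eq_one_of_mem_raagRels RAAG.commute_triEdgeImage)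
      RAAG.killB RAAG.killB_triEdgeImage).trans
    (MulEquiv.subgroupCongr RAAG.closure_range_triEdgeImage)).symm⟩
end

section
/- Let C₄ be the square graph on vertices {w, x, y, z} with edge set {wx, xy, yz, zw}, so that A(C₄) ≅ F₂ × F₂. Consider the eight elements u₁ = wx⁻¹, u₂ = wx, u₃ = xy⁻¹, u₄ = xy, u₅ = yz⁻¹, u₆ = yz, u₇ = wz⁻¹, u₈ = wz of A(C₄) (each a product of two commuting vertex generators). Let Λ be the graph on eight vertices with edge set {{1,2},{3,4},{5,6},{7,8}} (this is the commutation graph of u₁,…,u₈: uᵢ and uⱼ commute in A(C₄) exactly when {i,j} is one of these four pairs, and the same is true of any nonzero powers of the uᵢ). Then for every choice of nonzero integers n₁,…,n₈, the group homomorphism A(Λ) → A(C₄) sending the i-th vertex generator to uᵢ^{nᵢ} is not injective; that is, no nonzero powers of u₁,…,u₈ form a right-angled Artin system for the subgroup they generate. -/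
/-- The square graph `C₄` on vertices `w = 0, x = 1, y = 2, z = 3` with
edge set `{wx, xy, yz, zw}`, so `A(C₄) ≅ F₂ × F₂`. -/
def sqC4 : SimpleGraph (Fin 4) :=
  SimpleGraph.fromRel (fun i j => (i, j) ∈
    ([(0,1),(1,2),(2,3),(3,0)] : List (Fin 4 × Fin 4)))

/-- The eight elements `wx⁻¹, wx, xy⁻¹, xy, yz⁻¹, yz, wz⁻¹, wz` of `A(C₄)`. -/
def uElt : Fin 8 → PresentedGroup (raagRels sqC4) :=
  ![PresentedGroup.of 0 * (PresentedGroup.of 1)⁻¹,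
    PresentedGroup.of 0 * PresentedGroup.of 1,
    PresentedGroup.of 1 * (PresentedGroup.of 2)⁻¹,
    PresentedGroup.of 1 * PresentedGroup.of 2,
    PresentedGroup.of 2 * (PresentedGroup.of 3)⁻¹,
    PresentedGroup.of 2 * PresentedGroup.of 3,
    PresentedGroup.of 0 * (PresentedGroup.of 3)⁻¹,
    PresentedGroup.of 0 * PresentedGroup.of 3]

/-- The commutation graph of `u₁, …, u₈`: four disjoint edges. -/
def lambda8 : SimpleGraph (Fin 8) :=
  SimpleGraph.fromRel (fun i j => (i, j) ∈
    ([(0,1),(2,3),(4,5),(6,7)] : List (Fin 8 × Fin 8)))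

/-!
If `a` and `b` commute, the quotient of equal powers of `a * b` and `a * b⁻¹` is a power of `b`.
Thus `u₁`, `u₂` produce a power of `x`, while `u₃`, `u₄` produce a power of `y`, and `x` and `y`
commute. The corresponding words in `A(Λ)` do not: killing every vertex but the second and the
fourth turns them into nonzero powers of two elements that can be prescribed freely, such as an
upper and a lower unipotent of `SL(2, ℤ)`.
-/

section RightAngledArtinGroup

variable {V G : Type*} {Γ : SimpleGraph V} [Group G] {u v : V}

theorem commute_of_of_adj (h : Γ.Adj u v) :
    Commute (PresentedGroup.of u : PresentedGroup (raagRels Γ)) (PresentedGroup.of v) := by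
  have hr : PresentedGroup.mk (raagRels Γ)
      (FreeGroup.of u * FreeGroup.of v * (FreeGroup.of u)⁻¹ * (FreeGroup.of v)⁻¹) = 1 :=
    PresentedGroup.one_of_mem ⟨u, v, h, rfl⟩
  simp only [map_mul, map_inv] at hr
  exact mul_inv_eq_iff_eq_mul.mp (mul_inv_eq_one.mp hr)

/-- The universal property of a right-angled Artin group: a map on the vertices under which adjacent
vertices have commuting images extends to a homomorphism. -/
def raagLift (f : V → G) (hf : ∀ u v, Γ.Adj u v → Commute (f u) (f v)) :
    PresentedGroup (raagRels Γ) →* G :=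
  PresentedGroup.toGroup (f := f) <| by
    rintro _ ⟨u, v, huv, rfl⟩
    simp [(hf u v huv).eq]

@[simp]
theorem raagLift_of (f : V → G) (hf : ∀ u v, Γ.Adj u v → Commute (f u) (f v)) (v : V) :
    raagLift f hf (PresentedGroup.of v) = f v :=
  PresentedGroup.toGroup.of _

theorem exists_raag_hom_of_not_adj (huv : u ≠ v) (hadj : ¬ Γ.Adj u v) (a b : G) :
    ∃ ψ : PresentedGroup (raagRels Γ) →* G,
      ψ (PresentedGroup.of u) = a ∧ ψ (PresentedGroup.of v) = b ∧
        ∀ w, w ≠ u → w ≠ v → ψ (PresentedGroup.of w) = 1 := by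
  classical
  let f : V → G := fun w => if w = u then a else if w = v then b else 1
  have hf : ∀ p q, Γ.Adj p q → Commute (f p) (f q) := by
    intro p q hpq
    have hqp := hpq.symm
    dsimp only [f]
    split_ifs <;> simp_all
  refine ⟨raagLift f hf, ?_, ?_, fun w hwu hwv => ?_⟩
  · simp [f]
  · simp [f, huv.symm]
  · simp [f, hwu, hwv]

end RightAngledArtinGroup

section Unipotents

open ModularGroup

theorem coe_S_conj_T_zpow (l : ℤ) :
    (((S * T * S⁻¹) ^ l : Matrix.SpecialLinearGroup (Fin 2) ℤ) : Matrix (Fin 2) (Fin 2) ℤ) =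
      !![1, 0; -l, 1] := by
  rw [conj_zpow]
  simp [coe_T_zpow, coe_S, Matrix.adjugate_fin_two]

theorem not_commute_T_zpow_S_conj_T_zpow {k l : ℤ} (hk : k ≠ 0) (hl : l ≠ 0) :
    ¬ Commute (T ^ k) ((S * T * S⁻¹) ^ l) := by
  intro h
  have hmat : !![1, k; 0, 1] * !![1, 0; -l, 1] = !![1, 0; -l, 1] * !![1, k; 0, 1] := by
    simpa only [Matrix.SpecialLinearGroup.coe_mul _ ((S * T * S⁻¹) ^ l),
      Matrix.SpecialLinearGroup.coe_mul _ (T ^ k), coe_T_zpow, coe_S_conj_T_zpow]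
      using congrArg Subtype.val h.eq
  have hentry : 1 + -(k * l) = 1 := by simpa using congrFun₂ hmat 0 0
  exact mul_ne_zero hk hl (by linarith)

end Unipotents

theorem mul_zpow_div_mul_inv_zpow {G : Type*} [Group G] {a b : G} (h : Commute a b) (n : ℤ) :
    (a * b) ^ n / (a * b⁻¹) ^ n = b ^ (2 * n) :=
  calc (a * b) ^ n / (a * b⁻¹) ^ n = b ^ n * a ^ n / ((b ^ n)⁻¹ * a ^ n) := by
        rw [h.eq, h.inv_right.eq, h.symm.mul_zpow, h.symm.inv_left.mul_zpow, inv_zpow]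
    _ = b ^ (2 * n) := by
        rw [mul_div_mul_right_eq_div, div_inv_eq_mul, ← zpow_add, two_mul]

theorem no_raag_system_of_powers_general {V G : Type*} {Γ : SimpleGraph V} [Group G] {a b c : G}
    (hab : Commute a b) (hbc : Commute b c) {u u' v v' : V} (huv : u ≠ v) (hadj : ¬ Γ.Adj u v)
    (hu'u : u' ≠ u) (hu'v : u' ≠ v) (hv'u : v' ≠ u) (hv'v : v' ≠ v)
    {k k' l l' : ℤ} (hk' : k' ≠ 0) (hl' : l' ≠ 0) (φ : PresentedGroup (raagRels Γ) →* G)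
    (hu : φ (PresentedGroup.of u) = (a * b) ^ k) (hu' : φ (PresentedGroup.of u') = (a * b⁻¹) ^ k')
    (hv : φ (PresentedGroup.of v) = (b * c) ^ l) (hv' : φ (PresentedGroup.of v') = (b * c⁻¹) ^ l') :
    ¬ Function.Injective φ := by
  intro hinj
  let g : PresentedGroup (raagRels Γ) := PresentedGroup.of u ^ k' / PresentedGroup.of u' ^ k
  let h : PresentedGroup (raagRels Γ) := PresentedGroup.of v ^ l' / PresentedGroup.of v' ^ l
  have hφg : φ g = b ^ (2 * (k * k')) := by
    rw [map_div, map_zpow, map_zpow, hu, hu', ← zpow_mul, ← zpow_mul',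
      mul_zpow_div_mul_inv_zpow hab]
  have hφh : φ h = c ^ (2 * (l * l')) := by
    rw [map_div, map_zpow, map_zpow, hv, hv', ← zpow_mul, ← zpow_mul',
      mul_zpow_div_mul_inv_zpow hbc]
  have hφgh : Commute (φ g) (φ h) := by
    rw [hφg, hφh]
    exact hbc.zpow_zpow _ _
  have hgh : Commute g h := hφgh.of_map hinj
  obtain ⟨ψ, hψu, hψv, hψ⟩ := exists_raag_hom_of_not_adj huv hadj ModularGroup.T
    (ModularGroup.S * ModularGroup.T * ModularGroup.S⁻¹)
  have hψg : ψ g = ModularGroup.T ^ k' := by simp [g, hψu, hψ u' hu'u hu'v]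
  have hψh : ψ h = (ModularGroup.S * ModularGroup.T * ModularGroup.S⁻¹) ^ l' := by
    simp [h, hψv, hψ v' hv'u hv'v]
  exact not_commute_T_zpow_S_conj_T_zpow hk' hl' (hψg ▸ hψh ▸ hgh.map ψ)

/-- No nonzero powers of `u₁, …, u₈` form a right-angled Artin system: for any
nonzero exponents, the homomorphism `A(Λ) → A(C₄)` sending the `i`-th vertex
generator to `uᵢ^{nᵢ}` is not injective. -/
theorem no_raag_system_of_powers (n : Fin 8 → ℤ) (hn : ∀ i, n i ≠ 0)
    (φ : PresentedGroup (raagRels lambda8) →* PresentedGroup (raagRels sqC4))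
    (hφ : ∀ i, φ (PresentedGroup.of i) = uElt i ^ n i) :
    ¬ Function.Injective φ :=
  no_raag_system_of_powers_general (u := 1) (u' := 0) (v := 3) (v' := 2)
    (commute_of_of_adj (by simp [sqC4])) (commute_of_of_adj (by simp [sqC4])) (by decide)
    (by simp [lambda8]) (by decide) (by decide) (by decide) (by decide) (hn 0) (hn 2) φ
    (hφ 1) (hφ 0) (hφ 3) (hφ 2)
end

section
/- Unsolvability of the isomorphism problem for finitely generated subgroups of F₂ × F₂: there is no computable function f : List (Word × Word) → List (Word × Word) → Bool such that for all lists S and T, f S T = true if and only if the subgroup of F₂ × F₂ generated by the elements represented by S is isomorphic to the subgroup generated by the elements represented by T. -/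
/-- A word in the free group `F₂ = FreeGroup Bool`. -/
abbrev Word2 : Type := List (Bool × Bool)

/-- The subgroup of `F₂ × F₂` generated by the pairs of elements represented by a
list of pairs of words. -/
def pairsSubgroup (S : List (Word2 × Word2)) :
    Subgroup (FreeGroup Bool × FreeGroup Bool) :=
  Subgroup.closure {p | ∃ q ∈ S, p = (FreeGroup.mk q.1, FreeGroup.mk q.2)}

/-!
Let `F` be a finitely generated free subgroup of `F₂` and `N` the normal closure in `F` of finitely
many elements `r`. The fibre square `{(u, v) | u ≡ v mod N}` is generated by the pairs `(x, x)`, for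
`x` in a basis of `F`, and `(r, 1)`. Commutation is transitive on the nontrivial elements of a free
group, so the elements of the fibre square whose centralizer is not commutative recover `N × N`,
unless `N` is commutative. Hence isomorphic fibre squares of this kind come from quotients `F ⧸ N`
with or without torsion simultaneously.
An Adian–Rabin construction makes this quotient depend on a word `w`: it is a fixed free group if
`w` is trivial in a given finitely presented group, and it has torsion otherwise.

The finitely presented group is made from a stack machine with undecidable halting problem. Its
configurations are encoded as points of a lattice, so that its steps become finitely many partial
affine maps. Each point has a marker, which the letters for these maps transport along them, and a
detector commutes with the marker of the halting point; then `w` is the commutator of the detector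
with the marker of the initial configuration. A model in a wreath product shows that `w` is
nontrivial if the machine does not halt.
-/

section FreeGroups

variable {α G : Type*} [Group G]

theorem eq_of_commute_freeGroup_of {x y : α} (h : Commute (FreeGroup.of x) (FreeGroup.of y)) :
    x = y := by
  classical
  by_contra hne
  let f : FreeGroup α →* Equiv.Perm (Fin 3) :=
    FreeGroup.lift fun z => if z = x then Equiv.swap 0 1 else Equiv.swap 1 2
  have hswap : Commute (Equiv.swap (0 : Fin 3) 1) (Equiv.swap 1 2) := by
    simpa only [f, FreeGroup.lift_apply_of, if_true, if_neg (Ne.symm hne)] using h.map f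
  exact absurd hswap.eq (by decide)

theorem isCyclic_freeGroup [Subsingleton α] : IsCyclic (FreeGroup α) := by
  rcases isEmpty_or_nonempty α with _ | ⟨⟨x⟩⟩
  · infer_instance
  · have := uniqueOfSubsingleton x
    infer_instance

theorem isCyclic_of_subsingleton_generators [IsFreeGroup G]
    [Subsingleton (IsFreeGroup.Generators G)] : IsCyclic G :=
  have := isCyclic_freeGroup (α := IsFreeGroup.Generators G)
  isCyclic_of_surjective _ (IsFreeGroup.toFreeGroup G).symm.surjective

theorem isCyclic_of_forall_commute [IsFreeGroup G] (h : ∀ a b : G, Commute a b) : IsCyclic G := by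
  have : Subsingleton (IsFreeGroup.Generators G) := ⟨fun x y => eq_of_commute_freeGroup_of <| by
    simpa using (h ((IsFreeGroup.toFreeGroup G).symm (.of x))
      ((IsFreeGroup.toFreeGroup G).symm (.of y))).map (IsFreeGroup.toFreeGroup G)⟩
  exact isCyclic_of_subsingleton_generators

theorem mem_zpowers_of_commute_of {x : α} {z : FreeGroup α} (h : Commute z (FreeGroup.of x)) :
    z ∈ Subgroup.zpowers (FreeGroup.of x) := by
  classical
  let H := Subgroup.closure {z, FreeGroup.of x}
  have hH : IsCyclic H := by
    have := Subgroup.isMulCommutative_closure (k := {z, FreeGroup.of x}) (by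
      rintro a (rfl | rfl) b (rfl | rfl) <;> first | rfl | exact h.eq | exact h.eq.symm)
    exact isCyclic_of_forall_commute fun a b => this.is_comm.comm a b
  obtain ⟨c, hc⟩ := hH
  obtain ⟨m, hm⟩ := hc ⟨z, Subgroup.subset_closure (Set.mem_insert _ _)⟩
  obtain ⟨n, hn⟩ := hc ⟨.of x, Subgroup.subset_closure (Set.mem_insert_of_mem _ rfl)⟩
  replace hm : (c : FreeGroup α) ^ m = z := congrArg Subtype.val hm
  replace hn : (c : FreeGroup α) ^ n = FreeGroup.of x := congrArg Subtype.val hn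
  let exponentSum : FreeGroup α →* Multiplicative ℤ := FreeGroup.lift fun _ => .ofAdd 1
  have hunit : n * (exponentSum c).toAdd = 1 := by
    have := congrArg (fun g => (exponentSum g).toAdd) hn
    simpa [exponentSum] using this
  rcases Int.eq_one_or_neg_one_of_mul_eq_one hunit with rfl | rfl
  · exact ⟨m, by rw [← hn, zpow_one]; exact hm⟩
  · exact ⟨-m, by simp only [← hn, ← hm, zpow_neg, zpow_one, inv_zpow, inv_inv]⟩

theorem eq_one_of_commute_of_commute {x y : α} (hxy : x ≠ y) {z : FreeGroup α}
    (hx : Commute z (FreeGroup.of x)) (hy : Commute z (FreeGroup.of y)) : z = 1 := by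
  classical
  obtain ⟨m, rfl⟩ := mem_zpowers_of_commute_of hx
  obtain ⟨n, hn⟩ := mem_zpowers_of_commute_of hy
  let exponentSum : FreeGroup α →* Multiplicative ℤ :=
    FreeGroup.lift (Pi.mulSingle x (.ofAdd 1))
  have hm : 0 = m := by
    have := congrArg (fun g => (exponentSum g).toAdd) hn
    simpa [exponentSum, hxy.symm] using this
  simp [← hm]

theorem isCyclic_of_central [IsFreeGroup G] {g : G} (hg : g ≠ 1) (hcentral : ∀ a, Commute g a) :
    IsCyclic G := by
  let e := IsFreeGroup.toFreeGroup G
  have hgen (x : IsFreeGroup.Generators G) : Commute (e g) (.of x) := by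
    simpa using (hcentral (e.symm (.of x))).map e
  have : Subsingleton (IsFreeGroup.Generators G) := ⟨fun x y => by
    by_contra hxy
    have heg : e g = 1 := eq_one_of_commute_of_commute hxy (hgen x) (hgen y)
    exact hg ((map_eq_one_iff e e.injective).1 heg)⟩
  exact isCyclic_of_subsingleton_generators

/-- A group is commutative-transitive if commutation is a transitive relation on its nontrivial
elements. -/
def IsCommutativeTransitive (G : Type*) [Group G] : Prop :=
  ∀ ⦃g a b : G⦄, g ≠ 1 → Commute g a → Commute g b → Commute a b

theorem isCommutativeTransitive_of_isFreeGroup [IsFreeGroup G] : IsCommutativeTransitive G := by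
  intro g a b hg ha hb
  let Z := Subgroup.centralizer {g}
  have hcommute {c : G} : c ∈ Z ↔ Commute g c :=
    Subgroup.mem_centralizer_singleton_iff.trans eq_comm
  have : IsCyclic Z :=
    isCyclic_of_central (g := ⟨g, hcommute.2 (Commute.refl g)⟩)
      (fun h => hg (congrArg Subtype.val h)) fun c => Subtype.ext (hcommute.1 c.2)
  have hab : Commute (⟨a, hcommute.2 ha⟩ : Z) ⟨b, hcommute.2 hb⟩ :=
    IsCyclic.isMulCommutative.is_comm.comm _ _
  exact congrArg Subtype.val hab

/-- The homomorphism sending the `n`-th letter to the conjugate of the letter `true` by the `n`-th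
power of the letter `false`. -/
def conjugatesHom : FreeGroup ℕ →* FreeGroup Bool :=
  FreeGroup.lift fun n => .of false ^ n * .of true * (.of false ^ n)⁻¹

theorem conjugatesHom_injective : Function.Injective conjugatesHom := by
  let shift : Multiplicative ℤ →* MulAut (FreeGroup ℤ) :=
    zpowersHom _ (FreeGroup.freeGroupCongr (Equiv.addRight (1 : ℤ)))
  have hshift (n : ℕ) : shift (.ofAdd 1 ^ n) (.of 0) = .of (n : ℤ) := by
    induction n with
    | zero => simp
    | succ n ih =>
      rw [pow_succ', map_mul, MulAut.mul_apply, ih]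
      simp [shift]
  let f : FreeGroup Bool →* FreeGroup ℤ ⋊[shift] Multiplicative ℤ :=
    FreeGroup.lift fun b => if b then .inl (.of 0) else .inr (.ofAdd 1)
  have hf : f.comp conjugatesHom =
      SemidirectProduct.inl.comp (FreeGroup.map (Nat.cast : ℕ → ℤ)) := by
    ext1 n
    simp only [conjugatesHom, f, MonoidHom.comp_apply, FreeGroup.lift_apply_of, map_mul, map_pow,
      map_inv, FreeGroup.map.of, if_true, Bool.false_eq_true, if_false]
    rw [← hshift, SemidirectProduct.inl_aut, map_inv, map_pow]
  refine Function.Injective.of_comp (f := f) ?_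
  rw [← MonoidHom.coe_comp, hf]
  exact SemidirectProduct.inl_injective.comp (FreeGroup.map_injective Nat.cast_injective)

theorem exists_injective_freeGroup_bool (α : Type*) [Countable α] :
    ∃ f : FreeGroup α →* FreeGroup Bool, Function.Injective f := by
  obtain ⟨g, hg⟩ := exists_injective_nat α
  exact ⟨conjugatesHom.comp (FreeGroup.map g),
    conjugatesHom_injective.comp (FreeGroup.map_injective hg)⟩

end FreeGroups

section NonabelianCentralizers

variable {G H : Type*} [Group G] [Group H]

/-- The subgroup generated by the elements whose centralizer is not commutative. It is preserved
by isomorphisms and serves to recognize `N` inside a fibre square over `G ⧸ N`. -/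
def nonabelianCentralizerClosure (G : Type*) [Group G] : Subgroup G :=
  Subgroup.closure {g | ∃ a b, Commute g a ∧ Commute g b ∧ ¬ Commute a b}

theorem map_mem_nonabelianCentralizerClosure (e : G ≃* H) {g : G}
    (hg : g ∈ nonabelianCentralizerClosure G) : e g ∈ nonabelianCentralizerClosure H := by
  suffices nonabelianCentralizerClosure G ≤
      (nonabelianCentralizerClosure H).comap e.toMonoidHom from this hg
  refine (Subgroup.closure_le _).2 ?_
  rintro g ⟨a, b, ha, hb, hab⟩
  exact Subgroup.subset_closure ⟨e a, e b, ha.map e, hb.map e, fun h => hab <| by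
    simpa using h.map e.symm⟩

theorem map_mem_nonabelianCentralizerClosure_iff (e : G ≃* H) {g : G} :
    e g ∈ nonabelianCentralizerClosure H ↔ g ∈ nonabelianCentralizerClosure G :=
  ⟨fun h => by simpa using map_mem_nonabelianCentralizerClosure e.symm h,
    map_mem_nonabelianCentralizerClosure e⟩

end NonabelianCentralizers

section FiberSquare

variable {G P : Type*} [Group G] [Group P] {i : G →* P} {N : Subgroup G} [N.Normal] {u v : G}

/-- The image in `P × P` of the fibre product of two copies of `G → G ⧸ N`. -/
def fiberSquare (i : G →* P) (N : Subgroup G) [N.Normal] : Subgroup (P × P) :=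
  (MonoidHom.eqLocus ((QuotientGroup.mk' N).comp (MonoidHom.fst G G))
    ((QuotientGroup.mk' N).comp (MonoidHom.snd G G))).map (i.prodMap i)

theorem mem_fiberSquare {p : P × P} :
    p ∈ fiberSquare i N ↔ ∃ u v : G, u / v ∈ N ∧ (i u, i v) = p := by
  simp only [fiberSquare, Subgroup.mem_map, Prod.exists]
  refine exists₂_congr fun u v => and_congr_left' ?_
  rw [← QuotientGroup.eq_one_iff (N := N), QuotientGroup.mk_div, div_eq_one]
  rfl

theorem mk_mem_fiberSquare (h : u / v ∈ N) : (i u, i v) ∈ fiberSquare i N :=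
  mem_fiberSquare.2 ⟨u, v, h, rfl⟩

theorem diag_mem_fiberSquare : (i u, i u) ∈ fiberSquare i N :=
  mk_mem_fiberSquare (by simp)

theorem mk_one_mem_fiberSquare (hu : u ∈ N) : (i u, 1) ∈ fiberSquare i N := by
  simpa using mk_mem_fiberSquare (i := i) (N := N) (u := u) (v := 1) (by simpa)

theorem one_mk_mem_fiberSquare (hu : u ∈ N) : (1, i u) ∈ fiberSquare i N := by
  simpa using mk_mem_fiberSquare (i := i) (N := N) (u := 1) (v := u) (by simpa)

theorem closure_eq_fiberSquare (i : G →* P) {A R : Set G} (hA : Subgroup.closure A = ⊤) :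
    Subgroup.closure ((fun a => (i a, i a)) '' A ∪ (fun r => (i r, 1)) '' R) =
      fiberSquare i (Subgroup.normalClosure R) := by
  set M := Subgroup.closure ((fun a => (i a, i a)) '' A ∪ (fun r => (i r, (1 : P))) '' R)
  have diag_mem (g : G) : (i g, i g) ∈ M := by
    suffices Subgroup.closure A ≤ M.comap (i.prod i) from this (hA ▸ Subgroup.mem_top g)
    exact (Subgroup.closure_le _).2 fun a ha => Subgroup.subset_closure (Or.inl ⟨a, ha, rfl⟩)
  have normalClosure_le : Subgroup.normalClosure R ≤ M.comap (i.prod 1) := by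
    have : (M.comap (i.prod 1)).Normal := ⟨fun n hn g => by
      simpa [Subgroup.mem_comap] using
        M.mul_mem (M.mul_mem (diag_mem g) hn) (M.inv_mem (diag_mem g))⟩
    exact Subgroup.normalClosure_le_normal fun r hr =>
      Subgroup.subset_closure (Or.inr ⟨r, hr, rfl⟩)
  refine le_antisymm ((Subgroup.closure_le _).2 ?_) ?_
  · rintro _ (⟨a, -, rfl⟩ | ⟨r, hr, rfl⟩)
    · exact diag_mem_fiberSquare
    · exact mk_one_mem_fiberSquare (Subgroup.subset_normalClosure hr)
  · intro p hp
    obtain ⟨u, v, huv, rfl⟩ := mem_fiberSquare.1 hp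
    simpa using M.mul_mem (normalClosure_le huv) (diag_mem v)

theorem fst_mem_map_of_not_commute (hP : IsCommutativeTransitive P) {g a b : fiberSquare i N}
    (ha : Commute g a) (hb : Commute g b) (hab : ¬ Commute a b) : g.1.1 ∈ N.map i := by
  have fst_commute {x y : fiberSquare i N} (h : Commute x y) : Commute x.1.1 y.1.1 :=
    congrArg Prod.fst (congrArg Subtype.val h)
  have snd_commute {x y : fiberSquare i N} (h : Commute x y) : Commute x.1.2 y.1.2 :=
    congrArg Prod.snd (congrArg Subtype.val h)
  by_cases h₁ : g.1.1 = 1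
  · exact h₁ ▸ one_mem _
  by_cases h₂ : g.1.2 = 1
  · obtain ⟨u, v, huv, hg⟩ := mem_fiberSquare.1 g.2
    refine ⟨u / v, huv, ?_⟩
    have hv : i v = 1 := (congrArg Prod.snd hg).trans h₂
    rw [map_div, hv, div_one]
    exact congrArg Prod.fst hg
  · refine absurd (Subtype.ext (Prod.ext ?_ ?_)) hab
    · exact (hP h₁ (fst_commute ha) (fst_commute hb)).eq
    · exact (hP h₂ (snd_commute ha) (snd_commute hb)).eq

theorem mem_nonabelianCentralizerClosure_of_mem (hi : Function.Injective i)
    (hN : ∃ a ∈ N, ∃ b ∈ N, ¬ Commute a b) {m : fiberSquare i N} (hm : m.1.1 ∈ N.map i) :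
    m ∈ nonabelianCentralizerClosure (fiberSquare i N) := by
  obtain ⟨a, ha, b, hb, hab⟩ := hN
  have not_commute_map : ¬ Commute (i a) (i b) := fun h => hab (hi (by simpa using h.eq))
  have left_mem {n : G} (hn : n ∈ N) : (⟨(i n, 1), mk_one_mem_fiberSquare hn⟩ : fiberSquare i N) ∈
      nonabelianCentralizerClosure (fiberSquare i N) :=
    Subgroup.subset_closure ⟨⟨_, one_mk_mem_fiberSquare ha⟩, ⟨_, one_mk_mem_fiberSquare hb⟩,
      Subtype.ext (by simp), Subtype.ext (by simp),
      fun h => not_commute_map (congrArg Prod.snd (congrArg Subtype.val h))⟩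
  have right_mem {n : G} (hn : n ∈ N) : (⟨(1, i n), one_mk_mem_fiberSquare hn⟩ : fiberSquare i N) ∈
      nonabelianCentralizerClosure (fiberSquare i N) :=
    Subgroup.subset_closure ⟨⟨_, mk_one_mem_fiberSquare ha⟩, ⟨_, mk_one_mem_fiberSquare hb⟩,
      Subtype.ext (by simp), Subtype.ext (by simp),
      fun h => not_commute_map (congrArg Prod.fst (congrArg Subtype.val h))⟩
  obtain ⟨m, hm'⟩ := m
  obtain ⟨u, v, huv, rfl⟩ := mem_fiberSquare.1 hm'
  have hu : u ∈ N := (Subgroup.mem_map_iff_mem hi).1 hm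
  have hv : v ∈ N := by simpa using N.mul_mem (N.inv_mem huv) hu
  convert mul_mem (left_mem hu) (right_mem hv) using 1
  ext <;> simp

theorem mem_nonabelianCentralizerClosure_fiberSquare (hP : IsCommutativeTransitive P)
    (hi : Function.Injective i) (hN : ∃ a ∈ N, ∃ b ∈ N, ¬ Commute a b) {m : fiberSquare i N} :
    m ∈ nonabelianCentralizerClosure (fiberSquare i N) ↔ m.1.1 ∈ N.map i := by
  constructor
  · suffices nonabelianCentralizerClosure (fiberSquare i N) ≤
        (N.map i).comap ((MonoidHom.fst P P).comp (fiberSquare i N).subtype) from fun hm => this hm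
    refine (Subgroup.closure_le _).2 ?_
    rintro g ⟨a, b, ha, hb, hab⟩
    exact fst_mem_map_of_not_commute hP ha hb hab
  · exact mem_nonabelianCentralizerClosure_of_mem hi hN

theorem forall_pow_mem_nonabelianCentralizerClosure_iff (hP : IsCommutativeTransitive P)
    (hi : Function.Injective i) (hN : ∃ a ∈ N, ∃ b ∈ N, ¬ Commute a b) (n : ℕ) :
    (∀ m : fiberSquare i N, m ^ n ∈ nonabelianCentralizerClosure (fiberSquare i N) →
      m ∈ nonabelianCentralizerClosure (fiberSquare i N)) ↔ ∀ d, d ^ n ∈ N → d ∈ N := by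
  simp only [mem_nonabelianCentralizerClosure_fiberSquare hP hi hN]
  constructor
  · intro h d
    simpa [Subgroup.mem_map_iff_mem hi, ← map_pow] using h ⟨(i d, i d), diag_mem_fiberSquare⟩
  · rintro h ⟨m, hm⟩
    obtain ⟨u, v, -, rfl⟩ := mem_fiberSquare.1 hm
    simpa [Subgroup.mem_map_iff_mem hi, ← map_pow] using h u

theorem forall_pow_mem_iff_of_fiberSquare_mulEquiv {G' P' : Type*} [Group G'] [Group P']
    {i' : G' →* P'} {N' : Subgroup G'} [N'.Normal]
    (hP : IsCommutativeTransitive P) (hP' : IsCommutativeTransitive P')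
    (hi : Function.Injective i) (hi' : Function.Injective i')
    (hN : ∃ a ∈ N, ∃ b ∈ N, ¬ Commute a b) (hN' : ∃ a ∈ N', ∃ b ∈ N', ¬ Commute a b)
    (e : fiberSquare i N ≃* fiberSquare i' N') (n : ℕ) :
    (∀ d, d ^ n ∈ N → d ∈ N) ↔ ∀ d, d ^ n ∈ N' → d ∈ N' := by
  rw [← forall_pow_mem_nonabelianCentralizerClosure_iff hP hi hN,
    ← forall_pow_mem_nonabelianCentralizerClosure_iff hP' hi' hN']
  refine e.toEquiv.forall_congr fun {m} => ?_
  change _ ↔ (e m ^ n ∈ _ → e m ∈ _)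
  rw [← map_pow, map_mem_nonabelianCentralizerClosure_iff,
    map_mem_nonabelianCentralizerClosure_iff]

end FiberSquare

section Sheets

universe u

variable {G B : Type*} [Group G] [Group B]

theorem exists_equiv_comp_eq_and_apply_eq {J J' C : Type*} {f : J → C} {f' : J' → C}
    (h : ∀ c, Nonempty ({j // f j = c} ≃ {j // f' j = c})) {j₀ : J} {k₀ : J'}
    (h₀ : f j₀ = f' k₀) : ∃ e : J ≃ J', (∀ j, f' (e j) = f j) ∧ e j₀ = k₀ := by
  classical
  let e : J ≃ J' := (Equiv.sigmaFiberEquiv f).symm.trans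
    ((Equiv.sigmaCongrRight fun c => (h c).some).trans (Equiv.sigmaFiberEquiv f'))
  have he (j : J) : f' (e j) = f j := ((h (f j)).some ⟨j, rfl⟩).2
  refine ⟨e.trans (Equiv.swap (e j₀) k₀), fun j => ?_, Equiv.swap_apply_left _ _⟩
  exact (Equiv.apply_swap_eq_self ((he j₀).trans h₀) (e j)).trans (he j)

/-- Indices for copies of `G`: the first set colours the points of the copy, the second one provides
enough copies of each colouring. -/
abbrev Sheet (G : Type*) : Type _ := Set G × Set G

/-- A point of the sheet `s` is coloured if it lies in the first component of `s`. -/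
def Colored (z : G × Sheet G) : Prop := z.1 ∈ z.2.1

/-- The action of `G` on all sheets by left translations. It does not preserve colours. -/
def sheetTranslation (G : Type*) [Group G] : G →* Equiv.Perm (G × Sheet G) where
  toFun g := (Equiv.mulLeft g).prodCongr (Equiv.refl _)
  map_one' := by ext z <;> simp
  map_mul' g h := by ext z <;> simp [mul_assoc]

@[simp]
theorem sheetTranslation_apply (g : G) (z : G × Sheet G) :
    sheetTranslation G g z = (g * z.1, z.2) :=
  rfl

theorem sheetTranslation_injective : Function.Injective (sheetTranslation G) := fun g h hgh => by
  simpa using congrArg Prod.fst (Equiv.congr_fun hgh (1, ∅, ∅))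

/-- The points `β b * τ` of a sheet, for `τ` in a transversal of the range of `β`. -/
noncomputable def sheetCoordinates {β : B →* G} (hβ : Function.Injective β) {T : Set G}
    (hT : Subgroup.IsComplement (β.range : Set G) T) : B × (T × Sheet G) ≃ G × Sheet G :=
  (Equiv.prodAssoc B T (Sheet G)).symm.trans <|
    (((MonoidHom.ofInjective hβ).toEquiv.prodCongr (Equiv.refl T)).trans hT.equiv.symm).prodCongr
      (Equiv.refl _)

theorem sheetCoordinates_apply {β : B →* G} (hβ : Function.Injective β) {T : Set G}
    (hT : Subgroup.IsComplement (β.range : Set G) T) (b : B) (j : T × Sheet G) :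
    sheetCoordinates hβ hT (b, j) = (β b * j.1, j.2) :=
  rfl

theorem sheetTranslation_sheetCoordinates {β : B →* G} (hβ : Function.Injective β) {T : Set G}
    (hT : Subgroup.IsComplement (β.range : Set G) T) (b b' : B) (j : T × Sheet G) :
    sheetTranslation G (β b) (sheetCoordinates hβ hT (b', j)) =
      sheetCoordinates hβ hT (b * b', j) := by
  simp only [sheetTranslation_apply, sheetCoordinates_apply, map_mul, mul_assoc]

theorem nonempty_colored_fiber_equiv [Infinite G] {β : B →* G} (hβ : Function.Injective β)
    {T : Set G} (hT : T.Nonempty) (c : Set B) :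
    Nonempty ({j : T × Sheet G // {b | Colored (β b * j.1, j.2)} = c} ≃ Set G) := by
  obtain ⟨τ, hτ⟩ := hT
  rw [← Cardinal.eq]
  apply le_antisymm
  · have hinf : Cardinal.aleph0 ≤ Cardinal.mk (Set G) := Cardinal.aleph0_le_mk _
    have hT : Cardinal.mk T ≤ Cardinal.mk (Set G) :=
      (Cardinal.mk_set_le T).trans (by rw [Cardinal.mk_set]; exact (Cardinal.cantor _).le)
    refine (Cardinal.mk_subtype_le _).trans ?_
    simp only [Cardinal.mk_prod, Cardinal.lift_id, Cardinal.mul_eq_self hinf]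
    exact (Cardinal.mul_le_max_of_aleph0_le_right hinf).trans (max_le hT le_rfl)
  · refine Cardinal.mk_le_of_injective
      (f := fun w => ⟨(⟨τ, hτ⟩, (fun b => β b * τ) '' c, w), ?_⟩) fun w w' h => by simpa using h
    ext b
    exact ((mul_left_injective τ).comp hβ).mem_set_image

/- Every colouring of an orbit of `B` occurs on equally many orbits for both actions, so the orbits
can be matched. -/
theorem exists_colored_perm_conj [Infinite G] {β β' : B →* G} (hβ : Function.Injective β)
    (hβ' : Function.Injective β') {p p' : G} {s : Sheet G}
    (hs : ∀ b, Colored (β b * p, s) ↔ Colored (β' b * p', s)) :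
    ∃ r : Equiv.Perm (G × Sheet G),
      (∀ b, r * sheetTranslation G (β b) * r⁻¹ = sheetTranslation G (β' b)) ∧
      (∀ z, Colored (r z) ↔ Colored z) ∧ r (p, s) = (p', s) := by
  obtain ⟨T, hT, hp⟩ := Subgroup.exists_isComplement_right β.range p
  obtain ⟨T', hT', hp'⟩ := Subgroup.exists_isComplement_right β'.range p'
  let e := sheetCoordinates hβ hT
  let e' := sheetCoordinates hβ' hT'
  obtain ⟨θ, hθ, hθs⟩ := exists_equiv_comp_eq_and_apply_eq
    (f := fun j : T × Sheet G => {b | Colored (β b * j.1, j.2)})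
    (f' := fun j : T' × Sheet G => {b | Colored (β' b * j.1, j.2)})
    (j₀ := (⟨p, hp⟩, s)) (k₀ := (⟨p', hp'⟩, s))
    (fun c => ⟨(nonempty_colored_fiber_equiv hβ ⟨p, hp⟩ c).some.trans
      (nonempty_colored_fiber_equiv hβ' ⟨p', hp'⟩ c).some.symm⟩) (Set.ext hs)
  let r : Equiv.Perm (G × Sheet G) := e.symm.trans (((Equiv.refl B).prodCongr θ).trans e')
  have hr (b : B) (j : T × Sheet G) : r (e (b, j)) = e' (b, θ j) := by simp [r]
  refine ⟨r, fun b => ?_, fun z => ?_, ?_⟩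
  · rw [mul_inv_eq_iff_eq_mul]
    ext1 z
    obtain ⟨⟨b', j⟩, rfl⟩ := e.surjective z
    rw [Equiv.Perm.mul_apply, Equiv.Perm.mul_apply, sheetTranslation_sheetCoordinates,
      hr, hr, sheetTranslation_sheetCoordinates]
  · obtain ⟨⟨b, j⟩, rfl⟩ := e.surjective z
    rw [hr]
    exact Set.ext_iff.1 (hθ j) b
  · have hep : e (1, ⟨p, hp⟩, s) = (p, s) := by simp [e, sheetCoordinates_apply]
    rw [← hep, hr, hθs]
    simp [e', sheetCoordinates_apply]

theorem isConj_sheetTranslation {x y : G} (hx : ¬ IsOfFinOrder x) (hy : ¬ IsOfFinOrder y) :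
    IsConj (sheetTranslation G x) (sheetTranslation G y) := by
  have hx' : Function.Injective (zpowersHom G x) := injective_zpow_iff_not_isOfFinOrder.2 hx
  have hy' : Function.Injective (zpowersHom G y) := injective_zpow_iff_not_isOfFinOrder.2 hy
  have : Infinite G := Infinite.of_injective _ hx'
  obtain ⟨r, hr, -⟩ := exists_colored_perm_conj hx' hy' (p := 1) (p' := 1) (s := (∅, ∅))
    fun b => Iff.rfl
  exact isConj_iff.2 ⟨r, by simpa using hr (.ofAdd 1)⟩

theorem exists_embedding_isConj_mul {G : Type u} [Group G] {w : G} (hw : ¬ IsOfFinOrder w) :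
    ∃ (H : Type u) (_ : Group H) (j : G →* H) (c : H),
      Function.Injective j ∧ ∀ g, IsConj (j w) (j g * c) := by
  let T := sheetTranslation (G × Multiplicative ℤ)
  have hinl : ¬ IsOfFinOrder ((w, 1) : G × Multiplicative ℤ) := fun h =>
    hw (by simpa using (MonoidHom.fst G (Multiplicative ℤ)).isOfFinOrder h)
  have hinr (g : G) : ¬ IsOfFinOrder (g, Multiplicative.ofAdd (1 : ℤ)) := fun h => by
    have := (MonoidHom.snd G (Multiplicative ℤ)).isOfFinOrder h
    simp [isOfFinOrder_iff_zpow_eq_one] at this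
  refine ⟨_, inferInstance, T.comp (MonoidHom.inl _ _), T (1, .ofAdd 1),
    sheetTranslation_injective.comp (Prod.mk_left_injective 1), fun g => ?_⟩
  simpa [T, ← map_mul] using isConj_sheetTranslation hinl (hinr g)

end Sheets

section Killing

variable {α : Type*}

/-- The letters of the Adian–Rabin construction over a presentation with letters `α`: the letters
of `α` and one new letter, on the left, and a conjugating letter for each of these, on the right. -/
abbrev KillLetter (α : Type*) : Type _ := Option α ⊕ Option α

/-- The inclusion of the original letters. -/
def killEmbed (α : Type*) : FreeGroup α →* FreeGroup (KillLetter α) :=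
  FreeGroup.map (Sum.inl ∘ some)

/-- The element that the relator of index `o` identifies with a conjugate of the killed word. The
factor `of (inl none)` gives it infinite order whatever the original letter. -/
def killTarget (o : Option α) : FreeGroup (KillLetter α) :=
  o.elim 1 (fun a => .of (.inl (some a))) * .of (.inl none)

/-- The relator identifying a conjugate of `w` with `killTarget o`. -/
def killRelator (w : FreeGroup α) (o : Option α) : FreeGroup (KillLetter α) :=
  .of (.inr o) * killEmbed α w * (.of (.inr o))⁻¹ * (killTarget o)⁻¹

/-- The Adian–Rabin relators: if `w` is a consequence of `R`, they kill all letters but the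
conjugating ones, and if `w` has infinite order modulo `R`, the group presented by `R` survives. -/
def killRelators (R : Set (FreeGroup α)) (w : FreeGroup α) : Set (FreeGroup (KillLetter α)) :=
  killEmbed α '' R ∪ Set.range (killRelator w)

/-- The normal subgroup generated by all letters but the conjugating ones. -/
def killCollapse (α : Type*) : Subgroup (FreeGroup (KillLetter α)) :=
  Subgroup.normalClosure (Set.range fun o => .of (.inl o))

instance : (killCollapse α).Normal := Subgroup.normalClosure_normal

variable {R : Set (FreeGroup α)} {w : FreeGroup α}

theorem of_inl_mem_killCollapse (o : Option α) :
    (.of (.inl o) : FreeGroup (KillLetter α)) ∈ killCollapse α :=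
  Subgroup.subset_normalClosure ⟨o, rfl⟩

theorem killEmbed_mem_killCollapse (x : FreeGroup α) : killEmbed α x ∈ killCollapse α := by
  suffices (killEmbed α).range ≤ killCollapse α from this ⟨x, rfl⟩
  rw [killEmbed, FreeGroup.map_eq_lift]
  refine FreeGroup.range_lift_le ?_
  rintro _ ⟨a, rfl⟩
  exact of_inl_mem_killCollapse (some a)

theorem killTarget_mem_killCollapse (o : Option α) : killTarget o ∈ killCollapse α := by
  refine mul_mem ?_ (of_inl_mem_killCollapse none)
  cases o
  exacts [one_mem _, of_inl_mem_killCollapse _]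

theorem normalClosure_killRelators_le :
    Subgroup.normalClosure (killRelators R w) ≤ killCollapse α := by
  refine Subgroup.normalClosure_le_normal ?_
  rintro _ (⟨r, -, rfl⟩ | ⟨o, rfl⟩)
  · exact killEmbed_mem_killCollapse r
  · exact mul_mem (Subgroup.Normal.conj_mem inferInstance _ (killEmbed_mem_killCollapse w) _)
      (inv_mem (killTarget_mem_killCollapse o))

theorem killEmbed_mem_normalClosure {x : FreeGroup α} (hx : x ∈ Subgroup.normalClosure R) :
    killEmbed α x ∈ Subgroup.normalClosure (killRelators R w) :=
  Subgroup.normalClosure_mono Set.subset_union_left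
    (Subgroup.map_normalClosure_le R (killEmbed α) ⟨x, hx, rfl⟩)

theorem normalClosure_killRelators_eq (hw : w ∈ Subgroup.normalClosure R) :
    Subgroup.normalClosure (killRelators R w) = killCollapse α := by
  refine le_antisymm normalClosure_killRelators_le (Subgroup.normalClosure_le_normal ?_)
  set N := Subgroup.normalClosure (killRelators R w)
  have target_mem (o : Option α) : killTarget o ∈ N := by
    have hrel : killRelator w o ∈ N := Subgroup.subset_normalClosure (Or.inr ⟨o, rfl⟩)
    have hconj : .of (.inr o) * killEmbed α w * (.of (.inr o))⁻¹ ∈ N :=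
      Subgroup.Normal.conj_mem inferInstance _ (killEmbed_mem_normalClosure hw) _
    exact inv_mem_iff.1 ((N.mul_mem_cancel_left hconj).1 hrel)
  have none_mem : .of (.inl none) ∈ N := by simpa [killTarget] using target_mem none
  rintro _ ⟨_ | a, rfl⟩
  · exact none_mem
  · exact (N.mul_mem_cancel_right none_mem).1 (target_mem (some a))

theorem killEmbed_mem_normalClosure_iff
    (hw : ¬ IsOfFinOrder (w : FreeGroup α ⧸ Subgroup.normalClosure R)) {x : FreeGroup α} :
    killEmbed α x ∈ Subgroup.normalClosure (killRelators R w) ↔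
      x ∈ Subgroup.normalClosure R := by
  refine ⟨fun hx => ?_, killEmbed_mem_normalClosure⟩
  obtain ⟨H, _, j, c, hj, hconj⟩ := exists_embedding_isConj_mul hw
  choose s hs using fun g => isConj_iff.1 (hconj g)
  let letterClass (o : Option α) : FreeGroup α ⧸ Subgroup.normalClosure R :=
    o.elim 1 fun a => (FreeGroup.of a : FreeGroup α)
  let f : FreeGroup (KillLetter α) →* H :=
    FreeGroup.lift (Sum.elim (fun o => o.elim c fun a => j (letterClass (some a)))
      fun o => s (letterClass o))
  have hembed : f.comp (killEmbed α) = j.comp (QuotientGroup.mk' _) := by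
    ext1 a
    simp [f, killEmbed, letterClass]
  have apply_embed (y : FreeGroup α) : f (killEmbed α y) = j y := DFunLike.congr_fun hembed y
  have apply_target (o : Option α) : f (killTarget o) = j (letterClass o) * c := by
    cases o <;> simp [f, killTarget, letterClass]
  have hker : Subgroup.normalClosure (killRelators R w) ≤ f.ker := by
    refine Subgroup.normalClosure_le_normal ?_
    rintro _ (⟨r, hr, rfl⟩ | ⟨o, rfl⟩)
    · have hr' : (r : FreeGroup α ⧸ Subgroup.normalClosure R) = 1 :=
        (QuotientGroup.eq_one_iff _).2 (Subgroup.subset_normalClosure hr)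
      exact (apply_embed r).trans (by rw [hr', map_one])
    · have hs' : f (.of (.inr o)) = s (letterClass o) := by simp [f]
      rw [SetLike.mem_coe, MonoidHom.mem_ker, killRelator, map_mul, map_mul, map_mul, map_inv,
        map_inv, apply_embed, apply_target, hs', hs, mul_inv_cancel]
  rw [← QuotientGroup.eq_one_iff, ← map_eq_one_iff j hj, ← apply_embed]
  exact hker hx

theorem mem_killCollapse_of_pow_mem {n : ℕ} (hn : n ≠ 0) {d : FreeGroup (KillLetter α)}
    (hd : d ^ n ∈ killCollapse α) : d ∈ killCollapse α := by
  let ψ : FreeGroup (KillLetter α) →* FreeGroup (Option α) :=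
    FreeGroup.lift (Sum.elim 1 FreeGroup.of)
  have hker : killCollapse α = ψ.ker := by
    refine le_antisymm (Subgroup.normalClosure_le_normal ?_) fun x hx => ?_
    · rintro _ ⟨o, rfl⟩
      simp [ψ, MonoidHom.mem_ker]
    · have hfactor : ((QuotientGroup.mk' (killCollapse α)).comp (FreeGroup.map .inr)).comp ψ =
          QuotientGroup.mk' (killCollapse α) := by
        ext1 (o | o)
        · simpa [ψ] using ((QuotientGroup.eq_one_iff _).2 (of_inl_mem_killCollapse o)).symm
        · simp [ψ]
      rw [← QuotientGroup.eq_one_iff]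
      have := DFunLike.congr_fun hfactor x
      rwa [MonoidHom.comp_apply, hx, map_one, eq_comm] at this
  rw [hker, MonoidHom.mem_ker] at hd ⊢
  rw [map_pow] at hd
  exact (pow_eq_one_iff_left hn).1 hd

theorem exists_not_commute_normalClosure_killRelators :
    ∃ a ∈ Subgroup.normalClosure (killRelators R w),
      ∃ b ∈ Subgroup.normalClosure (killRelators R w), ¬ Commute a b := by
  have hrel : killRelator w none ∈ Subgroup.normalClosure (killRelators R w) :=
    Subgroup.subset_normalClosure (Or.inr ⟨none, rfl⟩)
  refine ⟨_, hrel, _, Subgroup.Normal.conj_mem inferInstance _ hrel (.of (.inr none)), fun h => ?_⟩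
  let f : FreeGroup (KillLetter α) →* Equiv.Perm (Fin 3) :=
    FreeGroup.lift (Sum.elim (fun o => o.elim (Equiv.swap 0 1) 1) fun _ => Equiv.swap 1 2)
  have hembed : f.comp (killEmbed α) = 1 := by
    ext1 a
    simp [f, killEmbed]
  have hf : f (killRelator w none) = Equiv.swap 0 1 := by
    have : f (killEmbed α w) = 1 := DFunLike.congr_fun hembed w
    simp only [killRelator, killTarget, map_mul, map_inv, this]
    simp [f]
  have hswap := h.map f
  simp only [map_mul, map_inv, hf] at hswap
  simp only [f, FreeGroup.lift_apply_of, Sum.elim_inr] at hswap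
  exact absurd hswap.eq (by decide)

/- If `w` is a consequence of `R`, both quotients are free; otherwise `d` survives as torsion in one
of them only. -/
theorem nonempty_fiberSquare_killRelators_mulEquiv_iff {P : Type*} [Group P]
    {i : FreeGroup (KillLetter α) →* P} (hP : IsCommutativeTransitive P)
    (hi : Function.Injective i) {n : ℕ} (hn : n ≠ 0) {d : FreeGroup α}
    (hdn : d ^ n ∈ Subgroup.normalClosure R)
    (hw : w ∉ Subgroup.normalClosure R → d ∉ Subgroup.normalClosure R ∧
      ¬ IsOfFinOrder (w : FreeGroup α ⧸ Subgroup.normalClosure R)) :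
    Nonempty (fiberSquare i (Subgroup.normalClosure (killRelators R w)) ≃*
      fiberSquare i (killCollapse α)) ↔ w ∈ Subgroup.normalClosure R := by
  refine ⟨fun ⟨e⟩ => ?_, fun hmem => ?_⟩
  · by_contra hmem
    obtain ⟨hd, hord⟩ := hw hmem
    obtain ⟨a, ha, b, hb, hab⟩ := exists_not_commute_normalClosure_killRelators (R := R) (w := w)
    have hiff := forall_pow_mem_iff_of_fiberSquare_mulEquiv hP hP hi hi ⟨a, ha, b, hb, hab⟩
      ⟨a, normalClosure_killRelators_le ha, b, normalClosure_killRelators_le hb, hab⟩ e n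
    have hd' := hiff.2 (fun _ => mem_killCollapse_of_pow_mem hn) (killEmbed α d) (by
      rw [← map_pow]
      exact killEmbed_mem_normalClosure hdn)
    exact hd ((killEmbed_mem_normalClosure_iff hord).1 hd')
  · exact ⟨MulEquiv.subgroupCongr (by congr 1; exact normalClosure_killRelators_eq hmem)⟩

end Killing

section AffineRules

/-- A partial map of a group `A`, identifying two cosets of subgroups isomorphic to `B`. -/
structure AffineRule (A B : Type*) [Group A] [Group B] where
  source : A
  target : A
  sourceHom : B →* A
  targetHom : B →* A
  sourceHom_injective : Function.Injective sourceHom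
  targetHom_injective : Function.Injective targetHom

variable {A B ι Γ : Type*} [Group A] [Group B] [Group Γ]

/-- The graph of the partial map defined by a rule. -/
def AffineRule.Rel (ρ : AffineRule A B) (p p' : A) : Prop :=
  ∃ b, p = ρ.sourceHom b * ρ.source ∧ p' = ρ.targetHom b * ρ.target

/-- One step of a system of rules. -/
def AffineStep (ρ : ι → AffineRule A B) (p q : A) : Prop :=
  ∃ i, (ρ i).Rel p q

/-- A realization of a system of rules in a group `Γ` containing an image of `A`: the rules become
elements acting by conjugation on the conjugates of a marker `t` by the points of `A`, and a
detector `c` commutes with the rules and with the marker at the final point `pf`. -/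
structure IsAffineRealization (ρ : ι → AffineRule A B) (pf : A) (X : A →* Γ) (r : ι → Γ)
    (t c : Γ) : Prop where
  conj_hom : ∀ i b, MulAut.conj (r i) (X ((ρ i).sourceHom b)) = X ((ρ i).targetHom b)
  conj_marker : ∀ i, MulAut.conj (r i) (MulAut.conj (X (ρ i).source) t) =
    MulAut.conj (X (ρ i).target) t
  marker_sq : t ^ 2 = 1
  commute_final : Commute c (MulAut.conj (X pf) t)
  commute_rule : ∀ i, Commute c (r i)

namespace IsAffineRealization

variable {ρ : ι → AffineRule A B} {pf p p' : A} {X : A →* Γ} {r : ι → Γ} {t c : Γ}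

theorem commute_iff_of_step (h : IsAffineRealization ρ pf X r t c) (hstep : AffineStep ρ p p') :
    Commute c (MulAut.conj (X p) t) ↔ Commute c (MulAut.conj (X p') t) := by
  obtain ⟨i, b, rfl, rfl⟩ := hstep
  have conj_point : MulAut.conj (r i) (MulAut.conj (X ((ρ i).sourceHom b * (ρ i).source)) t) =
      MulAut.conj (X ((ρ i).targetHom b * (ρ i).target)) t := by
    simp only [map_mul, MulAut.mul_apply, ← h.conj_marker i, ← h.conj_hom i b,
      MulAut.conj_apply (X _) (MulAut.conj _ _), map_inv]
    simp only [MulAut.conj_apply (MulAut.conj _ _)]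
  have conj_detector : MulAut.conj (r i) c = c := by
    rw [MulAut.conj_apply, ← (h.commute_rule i).eq, mul_inv_cancel_right]
  rw [← conj_point]
  conv_rhs => rw [← conj_detector]
  exact (Commute.conj_iff (r i)).symm

theorem commute_of_eqvGen (h : IsAffineRealization ρ pf X r t c)
    (hp : Relation.EqvGen (AffineStep ρ) p pf) : Commute c (MulAut.conj (X p) t) := by
  suffices ∀ q q', Relation.EqvGen (AffineStep ρ) q q' →
      (Commute c (MulAut.conj (X q) t) ↔ Commute c (MulAut.conj (X q') t)) from
    (this p pf hp).2 h.commute_final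
  intro q q' hq
  induction hq with
  | rel q q' hstep => exact h.commute_iff_of_step hstep
  | refl q => rfl
  | symm q q' _ ih => exact ih.symm
  | trans q q' q'' _ _ ih ih' => exact ih.trans ih'

end IsAffineRealization

end AffineRules

section WreathProduct

open scoped commutatorElement

variable {Y L : Type*} [Group L]

/-- The unrestricted wreath product of `L` with all permutations of `Y`. -/
abbrev PermWreath (Y L : Type*) [Group L] : Type _ :=
  (Y → L) ⋊[mulAutArrow (G := Equiv.Perm Y)] Equiv.Perm Y

/-- The copy of `L` at the point `y`. -/
def lamp [DecidableEq Y] (y : Y) : L →* PermWreath Y L :=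
  SemidirectProduct.inl.comp (MonoidHom.mulSingle (fun _ => L) y)

theorem lamp_injective [DecidableEq Y] (y : Y) :
    Function.Injective (lamp y : L →* PermWreath Y L) :=
  SemidirectProduct.inl_injective.comp (Pi.mulSingle_injective (M := fun _ => L) y)

theorem conj_inr_lamp [DecidableEq Y] (g : Equiv.Perm Y) (y : Y) (l : L) :
    MulAut.conj (.inr g : PermWreath Y L) (lamp y l) = lamp (g y) l := by
  rw [lamp, MonoidHom.comp_apply, MulAut.conj_apply, ← map_inv, ← SemidirectProduct.inl_aut]
  refine congrArg SemidirectProduct.inl (funext fun z => ?_)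
  change Pi.mulSingle (M := fun _ => L) y l (g⁻¹ z) = Pi.mulSingle (M := fun _ => L) (g y) l z
  simp only [Pi.mulSingle_apply, Equiv.Perm.inv_eq_iff_eq]

theorem commutatorElement_inl_lamp [DecidableEq Y] (f : Y → L) (y : Y) (l : L) :
    ⁅(.inl f : PermWreath Y L), lamp y l⁆ = lamp y ⁅f y, l⁆ := by
  rw [lamp, MonoidHom.comp_apply, ← map_commutatorElement]
  refine congrArg SemidirectProduct.inl (funext fun z => ?_)
  rcases eq_or_ne z y with rfl | h
  · simp [commutatorElement_def]
  · simp [commutatorElement_def, h]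

theorem commute_inl_inr {f : Y → L} {g : Equiv.Perm Y} (h : ∀ y, f (g y) = f y) :
    Commute (.inl f : PermWreath Y L) (.inr g) := by
  have invariant : mulAutArrow g f = f := by
    ext y
    change f (g⁻¹ y) = f y
    rw [← h]
    exact congrArg f (g.apply_symm_apply y)
  refine (mul_inv_eq_iff_eq_mul.mp ?_).symm
  rw [← map_inv, ← SemidirectProduct.inl_aut, invariant]

end WreathProduct

section Model

open scoped commutatorElement

theorem not_isOfFinOrder_commutator_dihedral :
    ¬ IsOfFinOrder
      ⁅(DihedralGroup.r 1 : DihedralGroup 0), (DihedralGroup.sr 0 : DihedralGroup 0)⁆ := by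
  have commutator_eq : ⁅(DihedralGroup.r 1 : DihedralGroup 0),
      (DihedralGroup.sr 0 : DihedralGroup 0)⁆ = DihedralGroup.r 2 := by
    simp [commutatorElement_def]
    rfl
  rw [commutator_eq, isOfFinOrder_iff_pow_eq_one]
  rintro ⟨n, hn, h⟩
  rw [DihedralGroup.r_pow, DihedralGroup.one_def, DihedralGroup.r.injEq] at h
  have : (2 : ℤ) * n = 0 := h
  omega

universe u

theorem exists_isAffineRealization {A : Type u} {B ι : Type*} [Group A] [Group B] [Infinite A]
    (ρ : ι → AffineRule A B) {H : Set A}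
    (hH : ∀ p p', AffineStep ρ p p' → (p ∈ H ↔ p' ∈ H)) {pf : A} (hpf : pf ∈ H) :
    ∃ (Γ : Type u) (_ : Group Γ) (X : A →* Γ) (r : ι → Γ) (t c : Γ),
      IsAffineRealization ρ pf X r t c ∧ t ≠ 1 ∧
        ∀ p ∉ H, ¬ IsOfFinOrder ⁅c, MulAut.conj (X p) t⁆ := by
  classical
  let s : Sheet A := (H, ∅)
  have exists_perm (i : ι) := exists_colored_perm_conj (ρ i).sourceHom_injective
    (ρ i).targetHom_injective (p := (ρ i).source) (p' := (ρ i).target) (s := s)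
    fun b => hH _ _ ⟨i, b, rfl, rfl⟩
  choose σ hconj hcolored hpoint using exists_perm
  let toWreath : Equiv.Perm (A × Sheet A) →* PermWreath (A × Sheet A) (DihedralGroup 0) :=
    SemidirectProduct.inr
  let X := toWreath.comp (sheetTranslation A)
  let t : PermWreath (A × Sheet A) (DihedralGroup 0) := lamp (1, s) (.sr 0)
  let color : A × Sheet A → DihedralGroup 0 := fun y => if Colored y then 1 else .r 1
  let c : PermWreath (A × Sheet A) (DihedralGroup 0) := .inl color
  have conj_t (p : A) : MulAut.conj (X p) t = lamp (p, s) (.sr 0) := by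
    refine (conj_inr_lamp _ _ _).trans ?_
    rw [sheetTranslation_apply, mul_one]
  have commutator_eq (p : A) :
      ⁅c, MulAut.conj (X p) t⁆ = lamp (p, s) ⁅color (p, s), .sr 0⁆ := by
    rw [conj_t, commutatorElement_inl_lamp]
  refine ⟨_, inferInstance, X, fun i => toWreath (σ i), t, c,
    ⟨fun i b => ?_, fun i => ?_, ?_, ?_, fun i => ?_⟩, ?_, fun p hp => ?_⟩
  · simp only [X, MonoidHom.comp_apply, MulAut.conj_apply, ← map_inv, ← map_mul, hconj]
  · rw [conj_t, conj_t, conj_inr_lamp, hpoint]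
  · rw [← map_pow, sq, DihedralGroup.sr_mul_self, map_one]
  · have hcolor : color (pf, s) = 1 := if_pos hpf
    rw [← commutatorElement_eq_one_iff_commute, commutator_eq, hcolor, commutatorElement_one_left,
      map_one]
  · exact commute_inl_inr fun y => by simp only [color, hcolored]
  · exact (map_ne_one_iff _ (lamp_injective _)).mpr nofun
  · have hcolor : color (p, s) = .r 1 := if_neg hp
    rw [commutator_eq, hcolor, (lamp_injective _).isOfFinOrder_iff]
    exact not_isOfFinOrder_commutator_dihedral

end Model

section Presentation

open Multiplicative (ofAdd toAdd)
open scoped commutatorElement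

/-- The letters of the presentation attached to a system of rules indexed by `ι` on a free abelian
group with basis `κ`: the basis, the rules, and two letters for the marker and the detector. -/
abbrev AffineLetter (κ ι : Type*) : Type _ := κ ⊕ ι ⊕ Bool

namespace AffineLetter

universe u

variable {κ : Type u} {K ι : Type*}

/-- The generator of a coordinate. -/
def coord (k : κ) : FreeGroup (AffineLetter κ ι) := .of (.inl k)

/-- The generator of a rule. -/
def rule (i : ι) : FreeGroup (AffineLetter κ ι) := .of (.inr (.inl i))

/-- The generator whose conjugates mark the points. -/
def marker : FreeGroup (AffineLetter κ ι) := .of (.inr (.inr false))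

/-- The generator commuting with the markers of the points equivalent to the final one. -/
def detector : FreeGroup (AffineLetter κ ι) := .of (.inr (.inr true))

theorem map_conj {Γ : Type*} [Group Γ] (f : FreeGroup (AffineLetter κ ι) →* Γ)
    (x y : FreeGroup (AffineLetter κ ι)) :
    f (MulAut.conj x y) = MulAut.conj (f x) (f y) := by
  simp only [MulAut.conj_apply, map_mul, map_inv]

theorem exists_hom_of_commute [Finite κ] [DecidableEq κ] {Γ : Type*} [Group Γ]
    {f : FreeGroup (AffineLetter κ ι) →* Γ}
    (h : ∀ k k' : κ, Commute (f (coord k)) (f (coord k'))) :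
    ∃ X : (κ → Multiplicative ℤ) →* Γ, ∀ k, f (coord k) = X (Pi.mulSingle k (ofAdd 1)) := by
  have := Fintype.ofFinite κ
  have commute_zpowers : Pairwise fun k k' => ∀ a b,
      Commute (zpowersHom Γ (f (coord k)) a) (zpowersHom Γ (f (coord k')) b) :=
    fun k k' _ a b => (h k k').zpow_zpow _ _
  refine ⟨MonoidHom.noncommPiCoprod _ commute_zpowers, fun k => ?_⟩
  rw [MonoidHom.noncommPiCoprod_mulSingle, zpowersHom_apply, toAdd_ofAdd, zpow_one]

variable [Fintype κ]

/-- The word representing a point. -/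
noncomputable def word (p : κ → Multiplicative ℤ) : FreeGroup (AffineLetter κ ι) :=
  (Finset.univ.toList.map fun k => coord k ^ toAdd (p k)).prod

/-- The marker of a point. -/
noncomputable def markerAt (p : κ → Multiplicative ℤ) : FreeGroup (AffineLetter κ ι) :=
  MulAut.conj (word p) marker

/-- The word which is trivial if and only if `p` is equivalent to the final point. -/
noncomputable def detectorWord (p : κ → Multiplicative ℤ) : FreeGroup (AffineLetter κ ι) :=
  ⁅(detector : FreeGroup (AffineLetter κ ι)), markerAt p⁆

variable {Γ : Type*} [Group Γ] {f : FreeGroup (AffineLetter κ ι) →* Γ}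
  {X : (κ → Multiplicative ℤ) →* Γ} {p pf : κ → Multiplicative ℤ}

variable [DecidableEq K] {ρ : ι → AffineRule (κ → Multiplicative ℤ) (K → Multiplicative ℤ)}

/-- The relators making the letters a realization of the system of rules `ρ` with final
point `pf`. -/
def affineRelators (ρ : ι → AffineRule (κ → Multiplicative ℤ) (K → Multiplicative ℤ))
    (pf : κ → Multiplicative ℤ) : Set (FreeGroup (AffineLetter κ ι)) :=
  Set.range (fun q : κ × κ => ⁅(coord q.1 : FreeGroup (AffineLetter κ ι)), coord q.2⁆) ∪
  Set.range (fun q : ι × K =>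
    MulAut.conj (rule q.1) (word ((ρ q.1).sourceHom (Pi.mulSingle q.2 (ofAdd 1)))) /
      word ((ρ q.1).targetHom (Pi.mulSingle q.2 (ofAdd 1)))) ∪
  Set.range (fun i =>
    MulAut.conj (rule i) (markerAt (ρ i).source) / markerAt (ρ i).target) ∪
  {marker ^ 2, detectorWord pf} ∪
  Set.range (fun i => ⁅(detector : FreeGroup (AffineLetter κ ι)), rule i⁆)

theorem finite_affineRelators [Finite K] [Finite ι] : (affineRelators ρ pf).Finite :=
  ((((Set.finite_range _).union (Set.finite_range _)).union (Set.finite_range _)).union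
    (Set.toFinite _)).union (Set.finite_range _)

theorem map_word [DecidableEq κ] (hX : ∀ k, f (coord k) = X (Pi.mulSingle k (ofAdd 1)))
    (p : κ → Multiplicative ℤ) : f (word p) = X p := by
  have map_coord_zpow (k : κ) : f (coord k ^ toAdd (p k)) = X (Pi.mulSingle k (p k)) := by
    rw [map_zpow, hX, ← map_zpow, ← Pi.mulSingle_zpow, ← ofAdd_zsmul, smul_eq_mul, mul_one,
      ofAdd_toAdd]
  rw [word, map_list_prod, List.map_map, Function.comp_def]
  simp only [map_coord_zpow]
  conv_rhs => rw [← Finset.univ_prod_mulSingle p, ← Finset.prod_map_toList, map_list_prod,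
    List.map_map, Function.comp_def]

theorem forall_affineRelators_map_eq_one_iff [Finite K] [DecidableEq κ]
    (hX : ∀ k, f (coord k) = X (Pi.mulSingle k (ofAdd 1))) :
    (∀ x ∈ affineRelators ρ pf, f x = 1) ↔
      IsAffineRealization ρ pf X (f ∘ rule) (f marker) (f detector) := by
  have commute_coord (k k' : κ) : Commute (f (coord k)) (f (coord k')) := by
    rw [hX, hX]
    exact (Commute.all _ _).map X
  have conj_hom_iff (i : ι) :
      (∀ k, MulAut.conj (f (rule i)) (X ((ρ i).sourceHom (Pi.mulSingle k (ofAdd 1)))) =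
        X ((ρ i).targetHom (Pi.mulSingle k (ofAdd 1)))) ↔
      ∀ b, MulAut.conj (f (rule i)) (X ((ρ i).sourceHom b)) = X ((ρ i).targetHom b) := by
    let φ := ((MulAut.conj (f (rule i))).toMonoidHom.comp X).comp (ρ i).sourceHom
    let ψ := X.comp (ρ i).targetHom
    let unit (k : K) := MonoidHom.mulSingle (fun _ : K => Multiplicative ℤ) k
    refine ⟨fun h => DFunLike.congr_fun (MonoidHom.pi_ext fun k => ?_ : φ = ψ), fun h k => h _⟩
    exact DFunLike.congr_fun (MonoidHom.ext_mint (h k) : φ.comp (unit k) = ψ.comp (unit k))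
  simp only [affineRelators, Set.mem_union, Set.mem_range, Set.mem_insert_iff,
    Set.mem_singleton_iff, or_imp, forall_and, forall_exists_index, forall_apply_eq_imp_iff,
    forall_eq, map_div, map_pow, map_conj, detectorWord, markerAt, map_word hX,
    map_commutatorElement, commutatorElement_eq_one_iff_commute, div_eq_one, and_assoc]
  simp only [Prod.forall, commute_coord, conj_hom_iff, implies_true, true_and]
  exact ⟨fun ⟨h₁, h₂, h₃, h₄, h₅⟩ => ⟨h₁, h₂, h₃, h₄, h₅⟩,
    fun ⟨h₁, h₂, h₃, h₄, h₅⟩ => ⟨h₁, h₂, h₃, h₄, h₅⟩⟩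

theorem detectorWord_mem_normalClosure [Finite K]
    (hp : Relation.EqvGen (AffineStep ρ) p pf) :
    detectorWord p ∈ Subgroup.normalClosure (affineRelators ρ pf) := by
  classical
  let f := QuotientGroup.mk' (Subgroup.normalClosure (affineRelators ρ pf))
  have map_eq_one : ∀ x ∈ affineRelators ρ pf, f x = 1 := fun x hx =>
    (QuotientGroup.eq_one_iff x).2 (Subgroup.subset_normalClosure hx)
  obtain ⟨X, hX⟩ := exists_hom_of_commute (f := f) fun k k' => by
    rw [← commutatorElement_eq_one_iff_commute, ← map_commutatorElement]
    exact map_eq_one _ (.inl (.inl (.inl (.inl ⟨(k, k'), rfl⟩))))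
  have commute := ((forall_affineRelators_map_eq_one_iff hX).1 map_eq_one).commute_of_eqvGen hp
  refine (QuotientGroup.eq_one_iff _).1 (?_ : f _ = 1)
  rwa [detectorWord, map_commutatorElement, commutatorElement_eq_one_iff_commute, markerAt,
    map_conj, map_word hX]

theorem marker_notMem_and_not_isOfFinOrder_detectorWord [Finite K] [Nonempty κ]
    (hp : ¬ Relation.EqvGen (AffineStep ρ) p pf) :
    marker ∉ Subgroup.normalClosure (affineRelators ρ pf) ∧
      ¬ IsOfFinOrder (detectorWord (ι := ι) p :
        FreeGroup (AffineLetter κ ι) ⧸ Subgroup.normalClosure (affineRelators ρ pf)) := by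
  classical
  obtain ⟨Γ, _, X, r, t, c, hreal, ht, horder⟩ := exists_isAffineRealization ρ
    (H := {q | Relation.EqvGen (AffineStep ρ) q pf}) (pf := pf)
    (fun q q' hstep => ⟨.trans _ _ _ (.symm _ _ (.rel _ _ hstep)), .trans _ _ _ (.rel _ _ hstep)⟩)
    (.refl pf)
  let f : FreeGroup (AffineLetter κ ι) →* Γ := FreeGroup.lift
    (Sum.elim (fun k => X (Pi.mulSingle k (ofAdd 1))) (Sum.elim r fun x => bif x then c else t))
  have hX (k : κ) : f (coord k) = X (Pi.mulSingle k (ofAdd 1)) := FreeGroup.lift_apply_of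
  have map_marker : f marker = t := FreeGroup.lift_apply_of
  have map_detector : f detector = c := FreeGroup.lift_apply_of
  have map_rule : f ∘ rule = r := funext fun i => FreeGroup.lift_apply_of
  have le_ker : Subgroup.normalClosure (affineRelators ρ pf) ≤ f.ker :=
    Subgroup.normalClosure_le_normal ((forall_affineRelators_map_eq_one_iff hX).2
      (by rwa [map_rule, map_marker, map_detector]))
  refine ⟨fun h => ht (map_marker ▸ le_ker h), fun h => horder p hp ?_⟩
  have := (QuotientGroup.lift _ f le_ker).isOfFinOrder h
  rwa [QuotientGroup.lift_mk, detectorWord, map_commutatorElement, map_detector, markerAt,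
    map_conj, map_marker, map_word hX] at this

theorem nonempty_fiberSquare_mulEquiv_iff [Finite K] [Nonempty κ] {P : Type*} [Group P]
    {i : FreeGroup (KillLetter (AffineLetter κ ι)) →* P} (hP : IsCommutativeTransitive P)
    (hi : Function.Injective i) :
    Nonempty (fiberSquare i
      (Subgroup.normalClosure (killRelators (affineRelators ρ pf) (detectorWord p))) ≃*
        fiberSquare i (killCollapse (AffineLetter κ ι))) ↔
      Relation.EqvGen (AffineStep ρ) p pf := by
  have detectorWord_mem_iff : detectorWord p ∈ Subgroup.normalClosure (affineRelators ρ pf) ↔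
      Relation.EqvGen (AffineStep ρ) p pf := by
    refine ⟨fun h => ?_, detectorWord_mem_normalClosure⟩
    by_contra hp
    refine (marker_notMem_and_not_isOfFinOrder_detectorWord hp).2 ?_
    rw [(QuotientGroup.eq_one_iff _).2 h]
    exact IsOfFinOrder.one
  rw [← detectorWord_mem_iff]
  refine nonempty_fiberSquare_killRelators_mulEquiv_iff hP hi two_ne_zero (d := marker)
    (Subgroup.subset_normalClosure (.inl (.inr (.inl rfl)))) fun h => ?_
  exact marker_notMem_and_not_isOfFinOrder_detectorWord (mt detectorWord_mem_iff.2 h)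

end AffineLetter

end Presentation

section StackMachines

open Multiplicative (ofAdd toAdd)
open StateTransition (Reaches eval)

theorem eqvGen_iff_reflTransGen_of_functional {α : Type*} {r : α → α → Prop} {a b : α}
    (hr : ∀ x y z, r x y → r x z → y = z) (hb : ∀ x, ¬ r b x) :
    Relation.EqvGen r a b ↔ Relation.ReflTransGen r a b := by
  refine ⟨fun h => ?_, Relation.EqvGen.reflTransGen_le_eqvGen r a b⟩
  have join_equivalence : Equivalence (Relation.Join (Relation.ReflTransGen r)) :=
    Relation.equivalence_join_reflTransGen fun x y z hy hz =>
      ⟨y, .refl, hr x y z hy hz ▸ .refl⟩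
  obtain ⟨c, hac, hbc⟩ := join_equivalence.eqvGen_iff.1 <|
    Relation.EqvGen.mono (fun x y hxy => ⟨y, .single hxy, .refl⟩) a b h
  obtain rfl | ⟨x, hbx, -⟩ := hbc.cases_head
  · exact hac
  · exact absurd hbx (hb x)

section StackValue

variable {α : Type*} [Fintype α]

/-- The base in which the letters of `α` serve as nonzero digits. -/
def stackBase (α : Type*) [Fintype α] : ℕ := Fintype.card α + 1

/-- The natural number whose digits in base `stackBase α`, least significant first, are the letters
of a stack. Zero is not the digit of a letter, so that the bottom of the stack can be detected. -/
noncomputable def stackValue (l : List α) : ℕ :=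
  Nat.ofDigits (stackBase α) (l.map fun x => (Fintype.equivFin α x : ℕ) + 1)

theorem stackValue_append (l l' : List α) :
    stackValue (l ++ l') = stackValue l + stackBase α ^ l.length * stackValue l' := by
  rw [stackValue, List.map_append, Nat.ofDigits_append, List.length_map]
  rfl

theorem stackValue_toList_lt (d : Option α) : stackValue d.toList < stackBase α := by
  cases d <;> simp [stackValue, stackBase]

theorem stackValue_toList_injective :
    Function.Injective fun d : Option α => stackValue d.toList := by
  rintro (_ | x) (_ | y) h <;> simp_all [stackValue, Fin.val_inj]

theorem stackValue_cons (x : α) (l : List α) :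
    stackValue (x :: l) = stackValue [x] + stackBase α * stackValue l := by
  simpa using stackValue_append [x] l

theorem stackValue_eq_head_add_tail (l : List α) :
    stackValue l = stackValue l.head?.toList + stackBase α * stackValue l.tail := by
  cases l with
  | nil => simp [stackValue]
  | cons x l => exact stackValue_cons x l

theorem eq_of_stackValue_toList_modEq {d d' : Option α}
    (h : (stackValue d.toList : ℤ) ≡ stackValue d'.toList [ZMOD stackBase α]) : d = d' :=
  stackValue_toList_injective <|
    (Int.natCast_modEq_iff.1 h).eq_of_lt_of_lt (stackValue_toList_lt d) (stackValue_toList_lt d')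

end StackValue

section Configurations

variable {K Q : Type*} {Γ : K → Type*} [∀ k, Fintype (Γ k)]

/-- The point of a lattice recording the number of a control state and the values of the stacks. -/
noncomputable def configPoint (e : Q → ℕ) (x : Q × ∀ k, List (Γ k)) :
    Option K → Multiplicative ℤ :=
  fun o => ofAdd ((o.elim (e x.1) fun k => stackValue (x.2 k) : ℕ) : ℤ)

/-- The homomorphism multiplying the registers by given factors. -/
def scaleHom (m : K → ℕ) : (K → Multiplicative ℤ) →* (Option K → Multiplicative ℤ) where
  toFun b o := o.elim 1 fun k => b k ^ m k
  map_one' := by funext o; cases o <;> simp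
  map_mul' b b' := by funext o; cases o <;> simp [mul_pow]

theorem scaleHom_injective {m : K → ℕ} (hm : ∀ k, m k ≠ 0) : Function.Injective (scaleHom m) := by
  intro b b' h
  funext k
  exact pow_left_injective (hm k) (congrFun h (some k))

theorem scaleHom_mul_configPoint (e : Q → ℕ) (q : Q) (l S : ∀ k, List (Γ k)) :
    scaleHom (fun k => stackBase (Γ k) ^ (l k).length) (fun k => ofAdd (stackValue (S k) : ℤ)) *
      configPoint e (q, l) = configPoint e (q, fun k => l k ++ S k) := by
  funext o
  apply toAdd.injective
  cases o with
  | none => simp [scaleHom, configPoint]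
  | some k => simp [scaleHom, configPoint, stackValue_append, mul_comm]

theorem scaleHom_mul_configPoint_heads (e : Q → ℕ) (x : Q × ∀ k, List (Γ k)) :
    scaleHom (fun k => stackBase (Γ k)) (fun k => ofAdd (stackValue (x.2 k).tail : ℤ)) *
      configPoint e (x.1, fun k => (x.2 k).head?.toList) = configPoint e x := by
  funext o
  apply toAdd.injective
  cases o with
  | none => simp [scaleHom, configPoint]
  | some k => simp [scaleHom, configPoint, stackValue_eq_head_add_tail (x.2 k), mul_comm, add_comm]

theorem eq_of_scaleHom_mul_configPoint_eq {e : Q → ℕ} {T : Set Q} (he : Set.InjOn e T) {q q' : Q}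
    (hq : q ∈ T) (hq' : q' ∈ T) {d d' : ∀ k, Option (Γ k)} {b b' : K → Multiplicative ℤ}
    (h : scaleHom (fun k => stackBase (Γ k)) b * configPoint e (q, fun k => (d k).toList) =
      scaleHom (fun k => stackBase (Γ k)) b' * configPoint e (q', fun k => (d' k).toList)) :
    q = q' ∧ d = d' := by
  constructor
  · have state_eq := congrArg toAdd (congrFun h none)
    exact he hq hq' (by simpa [scaleHom, configPoint] using state_eq)
  · funext k
    have register_eq := congrArg toAdd (congrFun h (some k))
    refine eq_of_stackValue_toList_modEq (Int.modEq_iff_dvd.2 ⟨toAdd (b k) - toAdd (b' k), ?_⟩)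
    simp only [scaleHom, configPoint, MonoidHom.coe_mk, OneHom.coe_mk, Pi.mul_apply, Option.elim,
      toAdd_mul, toAdd_pow, toAdd_ofAdd, nsmul_eq_mul] at register_eq
    linarith

end Configurations

section Machines

/-- The transition function of a deterministic machine with stacks over the alphabets `Γ k`: in
state `q`, it removes the heads of all stacks, enters a new state and puts words on the stacks. -/
abbrev StackMachine {K : Type*} (Q : Type*) (Γ : K → Type*) : Type _ :=
  Q → (∀ k, Option (Γ k)) → Option (Q × ∀ k, List (Γ k))

namespace StackMachine

variable {K Q : Type*} {Γ : K → Type*}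

/-- The step function of a stack machine. -/
def step (M : StackMachine Q Γ) (x : Q × ∀ k, List (Γ k)) : Option (Q × ∀ k, List (Γ k)) :=
  (M x.1 fun k => (x.2 k).head?).map fun y => (y.1, fun k => y.2 k ++ (x.2 k).tail)

/-- A set of states which no transition leaves. -/
def IsClosed (M : StackMachine Q Γ) (T : Set Q) : Prop :=
  ∀ q ∈ T, ∀ d, ∀ y ∈ M q d, y.1 ∈ T

/-- The pairs of a state in `T` and a family of stack heads for which there is a transition. -/
abbrev Transition (M : StackMachine Q Γ) (T : Set Q) : Type _ :=
  {x : T × ∀ k, Option (Γ k) // (M x.1 x.2).isSome}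

variable {M : StackMachine Q Γ} {T : Set Q} {x y : Q × ∀ k, List (Γ k)}

theorem IsClosed.step_mem (hT : M.IsClosed T) (hx : x.1 ∈ T) (hy : y ∈ M.step x) : y.1 ∈ T := by
  obtain ⟨z, hz, rfl⟩ := Option.map_eq_some_iff.1 hy
  exact hT _ hx _ z hz

variable [∀ k, Fintype (Γ k)]

variable (M T) in
/-- The rules which carry out the transitions of a stack machine on the points
`configPoint e x`. -/
noncomputable def affineRule (e : Q → ℕ) (i : M.Transition T) :
    AffineRule (Option K → Multiplicative ℤ) (K → Multiplicative ℤ) where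
  source := configPoint e (i.1.1, fun k => (i.1.2 k).toList)
  target := configPoint e ((M i.1.1 i.1.2).get i.2)
  sourceHom := scaleHom fun k => stackBase (Γ k)
  targetHom := scaleHom fun k => stackBase (Γ k) ^ (((M i.1.1 i.1.2).get i.2).2 k).length
  sourceHom_injective := scaleHom_injective fun _ => Nat.succ_ne_zero _
  targetHom_injective := scaleHom_injective fun _ => pow_ne_zero _ (Nat.succ_ne_zero _)

variable {e : Q → ℕ} {p p' p'' : Option K → Multiplicative ℤ}

theorem transition_eq_of_rel (he : Set.InjOn e T) {i j : M.Transition T}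
    (hi : (M.affineRule T e i).Rel p p') (hj : (M.affineRule T e j).Rel p p'') : i = j := by
  obtain ⟨b, rfl, -⟩ := hi
  obtain ⟨b', h, -⟩ := hj
  obtain ⟨state_eq, heads_eq⟩ := eq_of_scaleHom_mul_configPoint_eq he i.1.1.2 j.1.1.2 h
  exact Subtype.ext (Prod.ext (Subtype.ext state_eq) heads_eq)

theorem affineStep_functional (he : Set.InjOn e T) (h : AffineStep (M.affineRule T e) p p')
    (h' : AffineStep (M.affineRule T e) p p'') : p' = p'' := by
  obtain ⟨i, hi⟩ := h
  obtain ⟨j, hj⟩ := h'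
  obtain rfl := transition_eq_of_rel he hi hj
  obtain ⟨b, rfl, rfl⟩ := hi
  obtain ⟨b', h, rfl⟩ := hj
  rw [(M.affineRule T e i).sourceHom_injective (mul_right_cancel h)]

theorem affineStep_configPoint (hx : x.1 ∈ T) (hy : y ∈ M.step x) :
    AffineStep (M.affineRule T e) (configPoint e x) (configPoint e y) := by
  obtain ⟨z, hz, rfl⟩ := Option.map_eq_some_iff.1 hy
  refine ⟨⟨(⟨x.1, hx⟩, fun k => (x.2 k).head?), Option.isSome_of_mem hz⟩,
    fun k => ofAdd (stackValue (x.2 k).tail : ℤ), ?_, ?_⟩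
  · exact (scaleHom_mul_configPoint_heads e x).symm
  · simp only [affineRule, hz, Option.get_some]
    exact (scaleHom_mul_configPoint e z.1 z.2 fun k => (x.2 k).tail).symm

theorem affineStep_configPoint_iff (he : Set.InjOn e T) (hx : x.1 ∈ T) :
    AffineStep (M.affineRule T e) (configPoint e x) p ↔ ∃ y ∈ M.step x, p = configPoint e y := by
  constructor
  · intro h
    obtain hnone | ⟨y, hy⟩ := (M.step x).eq_none_or_eq_some
    · obtain ⟨i, b, hi, -⟩ := h
      obtain ⟨state_eq, heads_eq⟩ := eq_of_scaleHom_mul_configPoint_eq he hx i.1.1.2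
        ((scaleHom_mul_configPoint_heads e x).trans hi)
      have htransition := i.2
      rw [← state_eq, ← heads_eq, Option.map_eq_none_iff.1 hnone] at htransition
      exact absurd htransition Bool.false_ne_true
    · exact ⟨y, hy, affineStep_functional he h (affineStep_configPoint hx hy)⟩
  · rintro ⟨y, hy, rfl⟩
    exact affineStep_configPoint hx hy

theorem reflTransGen_configPoint_iff (he : Set.InjOn e T) (hT : M.IsClosed T) (hx : x.1 ∈ T) :
    Relation.ReflTransGen (AffineStep (M.affineRule T e)) (configPoint e x) p ↔
      ∃ y, Reaches M.step x y ∧ y.1 ∈ T ∧ p = configPoint e y := by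
  constructor
  · intro h
    induction h with
    | refl => exact ⟨x, .refl, hx, rfl⟩
    | tail _ hstep ih =>
      obtain ⟨y, hxy, hy, rfl⟩ := ih
      obtain ⟨z, hz, rfl⟩ := (affineStep_configPoint_iff he hy).1 hstep
      exact ⟨z, hxy.tail hz, hT.step_mem hy hz, rfl⟩
  · rintro ⟨y, hxy, -, rfl⟩
    induction hxy using Relation.ReflTransGen.head_induction_on with
    | refl => exact .refl
    | head hstep _ ih => exact .head (affineStep_configPoint hx hstep) (ih (hT.step_mem hx hstep))

theorem eqvGen_configPoint_iff (he : Set.InjOn e T) (hT : M.IsClosed T) (hx : x.1 ∈ T)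
    (hy : y.1 ∈ T) (hhalt : M.step y = none) (huniq : ∀ z ∈ eval M.step x, z = y) :
    Relation.EqvGen (AffineStep (M.affineRule T e)) (configPoint e x) (configPoint e y) ↔
      (eval M.step x).Dom := by
  have no_step : ∀ p, ¬ AffineStep (M.affineRule T e) (configPoint e y) p := by
    simp [affineStep_configPoint_iff he hy, hhalt]
  rw [eqvGen_iff_reflTransGen_of_functional (r := AffineStep _)
      (fun _ _ _ h h' => affineStep_functional he h h') no_step,
    reflTransGen_configPoint_iff he hT hx]
  constructor
  · rintro ⟨z, hxz, hz, hyz⟩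
    have hz_halt : M.step z = none := by
      refine Option.eq_none_iff_forall_not_mem.2 fun w hw => ?_
      exact no_step _ (hyz ▸ affineStep_configPoint hz hw)
    exact Part.dom_iff_mem.2 ⟨z, StateTransition.mem_eval.2 ⟨hxz, hz_halt⟩⟩
  · intro h
    obtain ⟨z, hz⟩ := Part.dom_iff_mem.1 h
    obtain rfl := huniq z hz
    exact ⟨z, (StateTransition.mem_eval.1 hz).1, hy, rfl⟩

end StackMachine

end Machines

section StatementMachine

open Function (update)
open Turing.TM2 (Stmt Cfg stepAux)
open Turing.TM2.Stmt

variable {K Λ σ : Type*} {Γ : K → Type*}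

/-- A configuration of a program `M`, with the label of the current function replaced by the
statement which it stands for. -/
def stmtCfg (M : Λ → Stmt Γ Λ σ) (c : Cfg Γ Λ σ) :
    (Option (Stmt Γ Λ σ) × σ) × ∀ k, List (Γ k) :=
  ((c.l.map M, c.var), c.stk)

theorem stmtCfg_mem [Inhabited Λ] {M : Λ → Stmt Γ Λ σ} {A : Finset Λ} {c : Cfg Γ Λ σ}
    (hc : ∀ l ∈ c.l, l ∈ A) :
    (stmtCfg M c).1 ∈ (Turing.TM2.stmts M A : Set (Option (Stmt Γ Λ σ))) ×ˢ Set.univ := by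
  obtain ⟨_ | l, v, S⟩ := c
  · simp [stmtCfg, Turing.TM2.stmts]
  · refine ⟨?_, trivial⟩
    simpa [stmtCfg, Turing.TM2.stmts] using ⟨l, hc l rfl, Turing.TM2.stmts₁_self⟩

variable [DecidableEq K]

/-- The stack machine executing one statement of a program of Mathlib's model `Turing.TM2` at a
time. Its state consists of the statement to be executed, or `none` after halting, and the internal
state of the program. -/
def stmtMachine (M : Λ → Stmt Γ Λ σ) : StackMachine (Option (Stmt Γ Λ σ) × σ) Γ
  | (none, _), _ => none
  | (some (push k f q), v), d =>
    some ((q, v), update (fun j => (d j).toList) k (f v :: (d k).toList))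
  | (some (peek k f q), v), d => some ((q, f v (d k)), fun j => (d j).toList)
  | (some (pop k f q), v), d => some ((q, f v (d k)), update (fun j => (d j).toList) k [])
  | (some (load f q), v), d => some ((q, f v), fun j => (d j).toList)
  | (some (branch f q₁ q₂), v), d =>
    some ((some (bif f v then q₁ else q₂), v), fun j => (d j).toList)
  | (some (goto f), v), d => some ((M (f v), v), fun j => (d j).toList)
  | (some halt, v), d => some ((none, v), fun j => (d j).toList)

theorem head?_toList_append_tail {α : Type*} (l : List α) : l.head?.toList ++ l.tail = l := by
  cases l <;> rfl

theorem update_append_tail (S : ∀ k, List (Γ k)) (k : K) (l : List (Γ k)) :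
    (fun j => update (fun j => (S j).head?.toList) k l j ++ (S j).tail) =
      update S k (l ++ (S k).tail) := by
  funext j
  rcases eq_or_ne j k with rfl | hj <;> simp [*, head?_toList_append_tail]

theorem reaches₁_stmtMachine_stepAux (M : Λ → Stmt Γ Λ σ) (q : Stmt Γ Λ σ) (v : σ)
    (S : ∀ k, List (Γ k)) :
    StateTransition.Reaches₁ (stmtMachine M).step ((some q, v), S) (stmtCfg M (stepAux q v S)) := by
  induction q generalizing v S with
  | push k f q ih =>
    refine .head ?_ (ih _ _)
    simp [StackMachine.step, stmtMachine, update_append_tail, head?_toList_append_tail]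
  | peek k f q ih =>
    refine .head ?_ (ih _ _)
    simp [StackMachine.step, stmtMachine, head?_toList_append_tail]
  | pop k f q ih =>
    refine .head ?_ (ih _ _)
    simp [StackMachine.step, stmtMachine, update_append_tail]
  | load f q ih =>
    refine .head ?_ (ih _ _)
    simp [StackMachine.step, stmtMachine, head?_toList_append_tail]
  | branch f q₁ q₂ ih₁ ih₂ =>
    have hstep : ((some (bif f v then q₁ else q₂), v), S) ∈
        (stmtMachine M).step ((some (branch f q₁ q₂), v), S) := by
      simp [StackMachine.step, stmtMachine, head?_toList_append_tail]
    rw [stepAux]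
    cases hf : f v <;> rw [hf] at hstep
    · exact .head hstep (ih₂ _ _)
    · exact .head hstep (ih₁ _ _)
  | goto _ | halt =>
    refine .single ?_
    simp [StackMachine.step, stmtMachine, stmtCfg, head?_toList_append_tail]

theorem respects_stmtMachine (M : Λ → Stmt Γ Λ σ) :
    StateTransition.Respects (Turing.TM2.step M) (stmtMachine M).step
      fun c x => stmtCfg M c = x := by
  refine StateTransition.fun_respects.2 fun c => ?_
  obtain ⟨_ | l, v, S⟩ := c
  · rfl
  · exact reaches₁_stmtMachine_stepAux M (M l) v S

theorem isClosed_stmtMachine [Inhabited Λ] {M : Λ → Stmt Γ Λ σ} {A : Finset Λ}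
    (hA : Turing.TM2.Supports M A) :
    (stmtMachine M).IsClosed ((Turing.TM2.stmts M A : Set (Option (Stmt Γ Λ σ))) ×ˢ Set.univ) := by
  rintro ⟨_ | q, v⟩ ⟨hq, -⟩ d y hy
  · cases hy
  · refine ⟨?_, trivial⟩
    have hsub : ∀ {q'}, q' ∈ Turing.TM2.stmts₁ q → some q' ∈ Turing.TM2.stmts M A :=
      fun h => Turing.TM2.stmts_trans h hq
    cases q with
    | branch f q₁ q₂ =>
      obtain rfl := Option.some.inj hy
      refine hsub ?_
      cases f v <;> simp [Turing.TM2.stmts₁, Turing.TM2.stmts₁_self]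
    | goto f =>
      obtain rfl := Option.some.inj hy
      have := Turing.TM2.stmts_supportsStmt hA hq v
      simpa [Turing.TM2.stmts] using ⟨f v, this, Turing.TM2.stmts₁_self⟩
    | halt =>
      obtain rfl := Option.some.inj hy
      simp [Turing.TM2.stmts]
    | _ =>
      obtain rfl := Option.some.inj hy
      exact hsub (by simp [Turing.TM2.stmts₁, Turing.TM2.stmts₁_self])

theorem exists_affineRule_eqvGen_iff_eval_dom {K Λ σ : Type} {Γ : K → Type} [DecidableEq K]
    [Finite K] [∀ k, Fintype (Γ k)] [Finite σ] [Inhabited Λ] {M : Λ → Stmt Γ Λ σ} {A : Finset Λ}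
    (hA : Turing.TM2.Supports M A) :
    ∃ (ι : Type) (_ : Finite ι) (e : Option (Stmt Γ Λ σ) × σ → ℕ)
      (ρ : ι → AffineRule (Option K → Multiplicative ℤ) (K → Multiplicative ℤ)),
      ∀ c d : Cfg Γ Λ σ, (∀ l ∈ c.l, l ∈ A) → d.l = none →
        (∀ c' ∈ eval (Turing.TM2.step M) c, c' = d) →
        (Relation.EqvGen (AffineStep ρ) (configPoint e (stmtCfg M c)) (configPoint e (stmtCfg M d))
          ↔ (eval (Turing.TM2.step M) c).Dom) := by
  have hfinite : ((Turing.TM2.stmts M A : Set (Option (Stmt Γ Λ σ))) ×ˢ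
      (Set.univ : Set σ)).Finite := (Finset.finite_toSet _).prod Set.finite_univ
  have := hfinite.to_subtype
  obtain ⟨e, he⟩ := Set.countable_iff_exists_injOn.1 hfinite.countable
  refine ⟨(stmtMachine M).Transition (Turing.TM2.stmts M A ×ˢ Set.univ), inferInstance, e,
    (stmtMachine M).affineRule _ e, fun c d hc hd huniq => ?_⟩
  have heval := StateTransition.tr_eval' _ _ _ (respects_stmtMachine M) c
  have hhalt : (stmtMachine M).step (stmtCfg M d) = none := by
    simp [StackMachine.step, stmtMachine, stmtCfg, hd]
  have huniq' : ∀ z ∈ eval (stmtMachine M).step (stmtCfg M c), z = stmtCfg M d := by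
    rw [heval]
    intro z hz
    obtain ⟨c', hc', rfl⟩ := (Part.mem_map_iff _).1 hz
    rw [huniq c' hc']
  rw [StackMachine.eqvGen_configPoint_iff he (isClosed_stmtMachine hA) (stmtCfg_mem hc)
    (stmtCfg_mem (by simp [hd])) hhalt huniq', heval]
  rfl

end StatementMachine

end StackMachines

section Halting

open Multiplicative (ofAdd)
open StateTransition (eval)
open Turing.ToPartrec (Code)
open Turing.PartrecToTM2 (Γ' K' trNat trList)

theorem trNat_bit (b : Bool) {n : ℕ} (hn : Nat.bit b n ≠ 0) :
    trNat (Nat.bit b n) = (bif b then Γ'.bit1 else Γ'.bit0) :: trNat n := by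
  rw [trNat, trNat, ← Num.ofNat'_eq, ← Num.ofNat'_eq, Num.ofNat'_bit]
  rcases h : Num.ofNat' n with _ | m
  · have hn₀ : n = 0 := by rw [← Num.to_of_nat n, ← Num.ofNat'_eq, h, Num.cast_zero']
    cases b
    · exact absurd (by simp [hn₀]) hn
    · rfl
  · cases b <;> rfl

theorem trNat_of_pos {n : ℕ} (hn : n ≠ 0) :
    trNat n = (bif n.bodd then Γ'.bit1 else Γ'.bit0) :: trNat n.div2 := by
  rw [← trNat_bit n.bodd (by rwa [Nat.bit_bodd_div2]), Nat.bit_bodd_div2]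

theorem primrec_stackValue_trList_singleton : Primrec fun n : ℕ => stackValue (trList [n]) := by
  let next (l : List ℕ) : Option ℕ :=
    if l.length = 0 then some (stackValue [Γ'.cons]) else
      l[l.length.div2]?.map fun y =>
        (bif l.length.bodd then stackValue [Γ'.bit1] else stackValue [Γ'.bit0]) +
          stackBase Γ' * y
  have hnext : Primrec next := by
    refine Primrec.ite (Primrec.eq.comp .list_length (.const 0)) (.const _) ?_
    refine Primrec.option_map
      (Primrec.list_getElem?.comp .id (Primrec.nat_div2.comp .list_length)) ?_
    exact Primrec.nat_add.comp
      (Primrec.cond (Primrec.nat_bodd.comp (Primrec.list_length.comp .fst)) (.const _) (.const _))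
      (Primrec.nat_mul.comp (.const _) .snd)
  have hvalue := Primrec.nat_strong_rec (fun (_ : Unit) n => stackValue (trList [n]))
    (g := fun _ => next) (hnext.comp .snd) ?_
  · exact hvalue.comp (.const ()) .id
  · intro _ n
    simp only [next, List.length_map, List.length_range]
    split_ifs with hn
    · simp [hn, trList]
    · have hlt : n.div2 < n := by rw [Nat.div2_val]; omega
      rw [List.getElem?_map, List.getElem?_range hlt, trList, trNat_of_pos hn]
      cases n.bodd <;> simp [stackValue_cons _ (_ ++ _), trList]

theorem exists_code_dom_iff {P : ℕ → Prop} (hP : REPred P) :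
    ∃ c : Code, ∀ n, (∀ w ∈ c.eval [n], w = [0]) ∧ ((c.eval [n]).Dom ↔ P n) := by
  let f : ℕ →. ℕ := fun n => (Part.assert (P n) fun _ => Part.some ()).map fun _ => 0
  have hf : Partrec f := Partrec.map hP (Computable.const 0).to₂
  obtain ⟨c, hc⟩ := Code.exists_code (Nat.Partrec'.part_iff₁.2 hf)
  refine ⟨c, fun n => ?_⟩
  have heval : c.eval [n] = (f n).map fun x => [x] := hc ⟨[n], rfl⟩
  rw [heval]
  constructor
  · simp [f, Part.mem_map_iff]
  · simp [f, Part.assert]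

instance : Fintype K' := ⟨{.main, .rev, .aux, .stack}, by rintro (_ | _ | _ | _) <;> simp⟩

theorem exists_affineRule_eqvGen_iff_of_rePred {P : ℕ → Prop} (hP : REPred P) :
    ∃ (ι : Type) (_ : Finite ι)
      (ρ : ι → AffineRule (Option K' → Multiplicative ℤ) (K' → Multiplicative ℤ))
      (p : ℕ → Option K' → Multiplicative ℤ) (pf : Option K' → Multiplicative ℤ),
      (∀ o, ∃ c : ℕ → ℕ, Computable c ∧ ∀ n, p n o = ofAdd (c n : ℤ)) ∧
        ∀ n, Relation.EqvGen (AffineStep ρ) (p n) pf ↔ P n := by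
  open Turing.PartrecToTM2 in
  obtain ⟨c, hc⟩ := exists_code_dom_iff hP
  let _ : Inhabited Λ' := ⟨trNormal c Cont'.halt⟩
  obtain ⟨ι, hι, e, ρ, hρ⟩ := exists_affineRule_eqvGen_iff_eval_dom (tr_supports c Cont'.halt)
  refine ⟨ι, hι, ρ, fun n => configPoint e (stmtCfg tr (init c [n])),
    configPoint e (stmtCfg tr (halt [0])), ?_, fun n => ?_⟩
  · rintro (_ | _ | _ | _ | _)
    · exact ⟨fun _ => e (some (tr (trNormal c Cont'.halt)), none), Computable.const _, fun _ => rfl⟩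
    · exact ⟨_, primrec_stackValue_trList_singleton.to_comp, fun _ => rfl⟩
    all_goals exact ⟨fun _ => 0, Computable.const _, fun _ => rfl⟩
  · obtain ⟨hvalue, hdom⟩ := hc n
    have heval := tr_eval c [n]
    refine (hρ (init c [n]) (halt [0]) ?_ rfl fun d hd => ?_).trans ?_
    · rintro _ ⟨⟩
      exact (tr_supports c Cont'.halt).1
    · rw [heval] at hd
      obtain ⟨w, hw, rfl⟩ := (Part.mem_map_iff _).1 hd
      rw [hvalue w hw]
    · rw [heval]
      exact hdom

theorem exists_rePred_not_computablePred : ∃ P : ℕ → Prop, REPred P ∧ ¬ ComputablePred P := by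
  refine ⟨fun n => (Nat.Partrec.Code.eval (Denumerable.ofNat Nat.Partrec.Code n) 0).Dom, ?_, ?_⟩
  · exact (ComputablePred.halting_problem_re 0).comp (Computable.ofNat _)
  · refine fun h => ComputablePred.halting_problem 0 ?_
    refine ComputablePred.computable_of_manyOneReducible ⟨Encodable.encode, Computable.encode, ?_⟩ h
    simp

end Halting

section ComputableGenerators

open scoped commutatorElement

/-- A family of elements of a free group which are represented by computable words. -/
def ComputableFamily {ι α : Type*} [Primcodable ι] [Primcodable α] (g : ι → FreeGroup α) : Prop :=
  ∃ w : ι → List (α × Bool), Computable w ∧ ∀ n, FreeGroup.mk (w n) = g n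

variable {ι : Type*} [Primcodable ι]

namespace ComputableFamily

variable {α : Type*} [Primcodable α] {g h : ι → FreeGroup α}

theorem const (x : FreeGroup α) : ComputableFamily fun _ : ι => x := by
  obtain ⟨w, rfl⟩ := Quot.exists_rep x
  exact ⟨fun _ => w, Computable.const w, fun _ => rfl⟩

theorem mul (hg : ComputableFamily g) (hh : ComputableFamily h) :
    ComputableFamily fun n => g n * h n := by
  obtain ⟨u, hu, hug⟩ := hg
  obtain ⟨v, hv, hvh⟩ := hh
  exact ⟨fun n => u n ++ v n, Computable.list_append.comp hu hv, fun n => by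
    simp only [← hug, ← hvh, FreeGroup.mul_mk]⟩

theorem inv (hg : ComputableFamily g) : ComputableFamily fun n => (g n)⁻¹ := by
  obtain ⟨u, hu, hug⟩ := hg
  have flip_primrec : Primrec fun x : α × Bool => (x.1, !x.2) :=
    Primrec.fst.pair (Primrec.not.comp Primrec.snd)
  have invRev_primrec : Primrec fun w : List (α × Bool) => FreeGroup.invRev w :=
    Primrec.list_reverse.comp (Primrec.list_map Primrec.id (flip_primrec.comp Primrec.snd).to₂)
  exact ⟨fun n => FreeGroup.invRev (u n), invRev_primrec.to_comp.comp hu, fun n => by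
    simp only [← hug, FreeGroup.inv_mk]⟩

theorem conj (hg : ComputableFamily g) (hh : ComputableFamily h) :
    ComputableFamily fun n => MulAut.conj (g n) (h n) :=
  (hg.mul hh).mul hg.inv

theorem commutator (hg : ComputableFamily g) (hh : ComputableFamily h) :
    ComputableFamily fun n => ⁅g n, h n⁆ :=
  ((hg.mul hh).mul hg.inv).mul hh.inv

theorem pow (x : FreeGroup α) {c : ι → ℕ} (hc : Computable c) :
    ComputableFamily fun n => x ^ c n := by
  obtain ⟨w, rfl⟩ := Quot.exists_rep x
  have repeat_primrec : Primrec fun n : ℕ => (n.rec [] fun _ l => w ++ l : List (α × Bool)) :=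
    Primrec.nat_rec₁ [] (Primrec.list_append.comp₂ (Primrec₂.const w) Primrec₂.right)
  refine ⟨_, repeat_primrec.to_comp.comp hc, fun n => ?_⟩
  dsimp only
  induction c n with
  | zero => rfl
  | succ m ih => exact FreeGroup.mul_mk.symm.trans ((congrArg _ ih).trans (pow_succ' _ m).symm)

theorem list_prod {κ : Type*} (l : List κ) {g : κ → ι → FreeGroup α}
    (hg : ∀ k, ComputableFamily (g k)) : ComputableFamily fun n => (l.map fun k => g k n).prod := by
  induction l with
  | nil => exact const 1
  | cons k l ih => simpa using (hg k).mul ih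

theorem detectorWord {κ τ : Type*} [Fintype κ] (f : FreeGroup (AffineLetter κ τ) →* FreeGroup α)
    {p : ι → κ → Multiplicative ℤ}
    (hp : ∀ k, ∃ c : ι → ℕ, Computable c ∧ ∀ n, p n k = Multiplicative.ofAdd (c n : ℤ)) :
    ComputableFamily fun n => f (AffineLetter.detectorWord (p n)) := by
  choose c hc hpc using hp
  have hword : ComputableFamily fun n => f (AffineLetter.word (p n)) := by
    have := list_prod (Finset.univ : Finset κ).toList fun k =>
      pow (f (AffineLetter.coord k)) (hc k)
    simpa [AffineLetter.word, hpc, map_list_prod, Function.comp_def] using this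
  simpa only [AffineLetter.detectorWord, AffineLetter.markerAt, map_commutatorElement,
    AffineLetter.map_conj] using (const _).commutator (hword.conj (const _))

theorem killRelator {β : Type*} (f : FreeGroup (KillLetter β) →* FreeGroup α)
    {w : ι → FreeGroup β} (hw : ComputableFamily fun n => f (killEmbed β (w n))) (o : Option β) :
    ComputableFamily fun n => f (killRelator (w n) o) := by
  simpa only [_root_.killRelator, map_mul, map_inv] using
    (((const _).mul hw).mul (const _)).mul (const _)

end ComputableFamily

theorem exists_computable_pairsSubgroup_eq {α : Type*} [Finite α] {g h : α → ι → FreeGroup Bool}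
    (hg : ∀ a, ComputableFamily (g a)) (hh : ∀ a, ComputableFamily (h a)) :
    ∃ S : ι → List (Word2 × Word2), Computable S ∧
      ∀ n, pairsSubgroup (S n) = Subgroup.closure (Set.range fun a => (g a n, h a n)) := by
  choose u hu hug using hg
  choose v hv hvh using hh
  have := Fintype.ofFinite α
  refine ⟨fun n => (Finset.univ : Finset α).toList.map fun a => (u a n, v a n), ?_, fun n => ?_⟩
  · induction (Finset.univ : Finset α).toList with
    | nil => exact Computable.const _
    | cons a l ih => exact Computable.list_cons.comp ((hu a).pair (hv a)) ih
  · rw [pairsSubgroup]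
    congr 1
    ext p
    simp [hug, hvh, eq_comm]

theorem exists_computable_pairsSubgroup_eq_fiberSquare {L α : Type*} [Finite L] [Finite α]
    (i : FreeGroup L →* FreeGroup Bool) {r : α → ι → FreeGroup L}
    (hr : ∀ a, ComputableFamily fun n => i (r a n)) :
    ∃ S : ι → List (Word2 × Word2), Computable S ∧ ∀ n,
      pairsSubgroup (S n) = fiberSquare i (Subgroup.normalClosure (Set.range fun a => r a n)) := by
  obtain ⟨S, hS, hSeq⟩ := exists_computable_pairsSubgroup_eq
    (g := Sum.elim (fun (x : L) _ => i (.of x)) fun a n => i (r a n))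
    (h := Sum.elim (fun (x : L) _ => i (.of x)) fun _ _ => 1)
    (by rintro (x | a); exacts [.const _, hr a]) (by rintro (_ | _) <;> exact .const _)
  refine ⟨S, hS, fun n => ?_⟩
  rw [hSeq, ← closure_eq_fiberSquare i (FreeGroup.closure_range_of L), ← Set.range_comp,
    ← Set.range_comp, ← Set.Sum.elim_range]
  congr 2
  funext x
  cases x <;> rfl

theorem exists_computable_pairsSubgroup_eq_fiberSquare_killRelators {α : Type*} [Finite α]
    (i : FreeGroup (KillLetter α) →* FreeGroup Bool) {R : Set (FreeGroup α)} (hR : R.Finite)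
    {w : ι → FreeGroup α} (hw : ComputableFamily fun n => i (killEmbed α (w n))) :
    ∃ S : ι → List (Word2 × Word2), Computable S ∧ ∀ n,
      pairsSubgroup (S n) = fiberSquare i (Subgroup.normalClosure (killRelators R (w n))) := by
  have := hR.to_subtype
  obtain ⟨S, hS, hSeq⟩ := exists_computable_pairsSubgroup_eq_fiberSquare i
    (r := Sum.elim (fun (x : R) _ => killEmbed α x) fun o n => killRelator (w n) o)
    (by rintro (x | o); exacts [.const (i (killEmbed α x)), .killRelator i hw o])
  refine ⟨S, hS, fun n => ?_⟩
  rw [hSeq]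
  congr 2
  rw [killRelators, Set.image_eq_range, ← Set.Sum.elim_range]
  congr 1
  funext x
  cases x <;> rfl

theorem exists_pairsSubgroup_eq_fiberSquare_killCollapse {α : Type*} [Finite α]
    (i : FreeGroup (KillLetter α) →* FreeGroup Bool) :
    ∃ T : List (Word2 × Word2), pairsSubgroup T = fiberSquare i (killCollapse α) := by
  obtain ⟨T, -, hT⟩ := exists_computable_pairsSubgroup_eq_fiberSquare (ι := Unit) i
    (r := fun (o : Option α) _ => .of (.inl o)) fun _ => .const _
  exact ⟨T (), hT ()⟩

end ComputableGenerators

theorem isomorphism_problem_F2xF2_unsolvable_general :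
    ∃ T : List (Word2 × Word2), ¬ ComputablePred fun S : List (Word2 × Word2) =>
      Nonempty (↥(pairsSubgroup S) ≃* ↥(pairsSubgroup T)) := by
  obtain ⟨P, hP, hundecidable⟩ := exists_rePred_not_computablePred
  obtain ⟨ι, _, ρ, p, pf, hp, hreach⟩ := exists_affineRule_eqvGen_iff_of_rePred hP
  let α := AffineLetter (Option Turing.PartrecToTM2.K') ι
  obtain ⟨i, hi⟩ := exists_injective_freeGroup_bool (KillLetter α)
  obtain ⟨S, hS, hSeq⟩ := exists_computable_pairsSubgroup_eq_fiberSquare_killRelators i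
    (AffineLetter.finite_affineRelators (ρ := ρ) (pf := pf))
    (.detectorWord (i.comp (killEmbed α)) hp)
  obtain ⟨T, hT⟩ := exists_pairsSubgroup_eq_fiberSquare_killCollapse i
  refine ⟨T, fun h => hundecidable (ComputablePred.computable_of_manyOneReducible
    ⟨S, hS, fun n => ?_⟩ h)⟩
  rw [hSeq, hT, AffineLetter.nonempty_fiberSquare_mulEquiv_iff
    isCommutativeTransitive_of_isFreeGroup hi, hreach]

/-- Unsolvability of the isomorphism problem for finitely generated subgroups of
`F₂ × F₂`: no computable function decides whether the subgroups generated by two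
given finite lists of elements are isomorphic. -/
theorem isomorphism_problem_F2xF2_unsolvable :
    ¬ ∃ f : List (Word2 × Word2) → List (Word2 × Word2) → Bool,
      Computable₂ f ∧
      ∀ S T : List (Word2 × Word2),
        (f S T = true ↔ Nonempty (↥(pairsSubgroup S) ≃* ↥(pairsSubgroup T))) := by
  rintro ⟨f, hf, hiso⟩
  obtain ⟨T, hT⟩ := isomorphism_problem_F2xF2_unsolvable_general
  exact hT (ComputablePred.computable_iff.2
    ⟨fun S => f S T, hf.comp .id (.const T), funext fun S => propext (hiso S T).symm⟩)
end
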